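/- arXiv:1603.08715 — 6 statements merged into one kernel-verified Lean document; each statement's English description precedes it below -/
import Mathlib

section
/- Let d, n, k ≥ 1 and let Y = Σ^{ℤ^d} × {0^{ℤ^d}} ⊆ X_{n,k} be the set of configurations with no head. Then TM(ℤ^d,n,k) equals the set of endomorphisms φ of X_{n,k} (continuous shift-equivariant self-maps of X_{n,k}) such that φ restricted to Y is the identity and φ^{-1}(Y) = Y; and RTM(ℤ^d,n,k) equals the set of automorphisms φ of X_{n,k} (bijective endomorphisms whose inverse is also an endomorphism) such that φ restricted to Y is the identity. -/
open Function

/-- `ℤ^d`. -/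
abbrev V (d : ℕ) : Type := Fin d → ℤ

/-- A head configuration is valid if it carries at most one head. -/
def headOk {d k : ℕ} (y : V d → Option (Fin k)) : Prop :=
  ∀ u v : V d, (y u).isSome → (y v).isSome → u = v

/-- The space `X_{n,k}`: a tape in `Σ^{ℤ^d}` together with at most one head
carrying a state in `Q = Fin k`. -/
abbrev X (d n k : ℕ) : Type :=
  { c : (V d → Fin n) × (V d → Option (Fin k)) // headOk c.2 }

/-- `DefinedBy F F' f T` : `T` is the moving-head Turing machine defined by the
local rule `f`, reading the tape on the window `F`, writing on the window `F'`,
changing the state and moving the head. -/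
def DefinedBy {d n k : ℕ} (F F' : Finset (V d))
    (f : (V d → Fin n) → Fin k → (V d → Fin n) × Fin k × V d)
    (T : X d n k → X d n k) : Prop :=
  -- `f` only depends on the restriction of the tape to `F`, and only the
  -- restriction of its tape output to `F'` matters:
  (∀ x x' q, (∀ v ∈ F, x v = x' v) →
      (∀ v ∈ F', (f x q).1 v = (f x' q).1 v) ∧ (f x q).2 = (f x' q).2) ∧
  -- a configuration with no head is fixed:
  (∀ c : X d n k, (∀ v, c.val.2 v = none) → T c = c) ∧
  -- if the head is at `v` in state `q`, apply the local rule there: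
  (∀ (c : X d n k) (v : V d) (q : Fin k), c.val.2 v = some q →
    (∀ t, (T c).val.1 t =
      if t - v ∈ F' then (f (fun u => c.val.1 (u + v)) q).1 (t - v) else c.val.1 t) ∧
    (∀ t, (T c).val.2 t =
      if t = v + (f (fun u => c.val.1 (u + v)) q).2.2
      then some (f (fun u => c.val.1 (u + v)) q).2.1 else none))

/-- A moving-head `(d,n,k)`-Turing machine. -/
def IsTM {d n k : ℕ} (T : X d n k → X d n k) : Prop :=
  ∃ F F' f, DefinedBy F F' f T

/-- A reversible moving-head Turing machine: a Turing machine admitting a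
Turing machine inverse. -/
def IsRTM {d n k : ℕ} (T : X d n k → X d n k) : Prop :=
  IsTM T ∧ ∃ S : X d n k → X d n k, IsTM S ∧ S ∘ T = id ∧ T ∘ S = id

instance (k : ℕ) : TopologicalSpace (Option (Fin k)) := ⊥

/-- The shift `ℤ^d`-action on `X_{n,k}`. -/
def shiftX {d n k : ℕ} (u : V d) (c : X d n k) : X d n k :=
  ⟨(fun t => c.val.1 (t - u), fun t => c.val.2 (t - u)), by
    intro a b ha hb
    have h := c.prop _ _ ha hb
    exact sub_left_inj.mp h⟩

/-- `Y`: the set of configurations with no head. -/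
def Y (d n k : ℕ) : Set (X d n k) := {c | ∀ v, c.val.2 v = none}

/-- Endomorphisms of the subshift `X_{n,k}`: continuous shift-equivariant self-maps. -/
def IsEndo {d n k : ℕ} (φ : X d n k → X d n k) : Prop :=
  Continuous φ ∧ ∀ (u : V d) (c : X d n k), φ (shiftX u c) = shiftX u (φ c)

/-!
A continuous shift-equivariant map on the compact space `X_{n,k}` is a cellular automaton: the
cell at `t` of the image depends only on the cells at `t + W`, for a fixed finite memory set `W`
(Curtis–Hedlund–Lyndon). If headless configurations are fixed, comparing a configuration with its
headless version shows that nothing changes at `t` unless the head lies in `t + W`; so the image of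
a configuration with its head at the origin, restricted to `-W`, is the local rule of a Turing
machine. The condition `φ⁻¹(Y) = Y` says that the head survives, and is automatic for injective
`φ`. Conversely, the only obstacle to the continuity of a Turing machine is a head arriving from
far away, which is excluded because a rule reading a finite window makes finitely many moves.
-/

section FiniteWindows

open Set Topology

variable {ι Z : Type*} {A : ι → Type*}

theorem finite_range_of_dependsOn {B : Type*} [∀ i, Finite (A i)] {f : (∀ i, A i) → B}
    {s : Set ι} (hs : s.Finite) (hf : DependsOn f s) : (range f).Finite := by
  have := hs.to_subtype
  cases isEmpty_or_nonempty B
  · exact toFinite _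
  obtain ⟨g, rfl⟩ := dependsOn_iff_exists_comp.mp hf
  exact (finite_range g).subset (range_comp_subset_range _ g)

variable [TopologicalSpace Z] [∀ i, TopologicalSpace (A i)] [∀ i, DiscreteTopology (A i)]
  {e : Z → ∀ i, A i}

theorem hasBasis_nhds_of_isInducing_pi (he : IsInducing e) (z : Z) :
    (𝓝 z).HasBasis Set.Finite fun W => {z' | ∀ i ∈ W, e z' i = e z i} := by
  rw [he.nhds_eq_comap, nhds_pi]
  simp only [nhds_discrete]
  exact (Filter.hasBasis_pi_pure (e z)).comap e

theorem exists_finite_eq_of_forall_eq [CompactSpace Z] {B : Type*} [TopologicalSpace B]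
    [DiscreteTopology B] (he : IsInducing e) {g : Z → B} (hg : Continuous g) :
    ∃ W : Set ι, W.Finite ∧ ∀ z z', (∀ i ∈ W, e z i = e z' i) → g z = g z' := by
  have hlocal (z : Z) : ∃ W : Set ι, W.Finite ∧ {z' | ∀ i ∈ W, e z' i = e z i} ⊆ g ⁻¹' {g z} :=
    (hasBasis_nhds_of_isInducing_pi he z).mem_iff.mp
      (hg.continuousAt.preimage_mem_nhds (mem_nhds_discrete.mpr rfl))
  choose W hWfin hW using hlocal
  obtain ⟨t, -, ht⟩ := isCompact_univ.elim_nhds_subcover (fun z => {z' | ∀ i ∈ W z, e z' i = e z i})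
    fun z _ => (hasBasis_nhds_of_isInducing_pi he z).mem_of_mem (hWfin z)
  refine ⟨⋃ a ∈ t, W a, t.finite_toSet.biUnion fun a _ => hWfin a, fun z z' hzz' => ?_⟩
  obtain ⟨a, hat, hza⟩ := mem_iUnion₂.mp (ht (mem_univ z))
  have hz'a : ∀ i ∈ W a, e z' i = e a i := fun i hi =>
    (hzz' i (mem_biUnion hat hi)).symm.trans (hza i hi)
  exact (hW a hza).trans (hW a hz'a).symm

end FiniteWindows

theorem preimage_eq_self_of_injective {α : Type*} {φ : α → α} {s : Set α}
    (hφ : Injective φ) (hs : ∀ c ∈ s, φ c = c) : φ ⁻¹' s = s :=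
  calc φ ⁻¹' s = φ ⁻¹' (φ '' s) := by rw [Set.EqOn.image_eq_self hs]
    _ = s := hφ.preimage_image s

instance (k : ℕ) : DiscreteTopology (Option (Fin k)) := ⟨rfl⟩

section TuringMachines

variable {d n k : ℕ}

namespace X

open Topology

/-- The symbol at `v` of a configuration, seen as a point of a subshift over the product
alphabet of tape letters and head symbols. -/
def cell (c : X d n k) (v : V d) : Fin n × Option (Fin k) := (c.val.1 v, c.val.2 v)

/-- The tape of `σ_{-v} c`, which is what a head at `v` reads. -/
def tapeFrom (c : X d n k) (v : V d) : V d → Fin n := fun u => c.val.1 (u + v)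

/-- The configuration with tape `x` and no head, which `φ` fixes when it fixes `Y` pointwise. -/
def headless (x : V d → Fin n) : X d n k :=
  ⟨(x, fun _ => none), by intro u v hu; simp at hu⟩

/-- The configuration with tape `x` and a head in state `q` at the origin; up to a shift, every
configuration with a head is of this form. -/
def headAtOrigin (x : V d → Fin n) (q : Fin k) : X d n k :=
  ⟨(x, fun v => if v = 0 then some q else none), by intro u v hu hv; simp_all⟩

theorem ext_cell {c c' : X d n k} (h : ∀ t, c.cell t = c'.cell t) : c = c' :=
  Subtype.ext <| Prod.ext (funext fun t => congrArg Prod.fst (h t))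
    (funext fun t => congrArg Prod.snd (h t))

theorem cell_shiftX (u : V d) (c : X d n k) (t : V d) :
    cell (shiftX u c) t = c.cell (t - u) := rfl

theorem tapeFrom_shiftX (u v : V d) (c : X d n k) :
    tapeFrom (shiftX u c) (v + u) = c.tapeFrom v := by
  funext w
  simp only [tapeFrom, shiftX, ← add_assoc, add_sub_cancel_right]

theorem exists_head_of_notMem_Y {c : X d n k} (hc : c ∉ Y d n k) :
    ∃ v q, c.val.2 v = some q := by
  obtain ⟨v, hv⟩ := not_forall.mp hc
  exact ⟨v, Option.ne_none_iff_exists'.mp hv⟩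

theorem head_eq_ite {c : X d n k} {v : V d} {q : Fin k} (hv : c.val.2 v = some q) (t : V d) :
    c.val.2 t = if t = v then some q else none := by
  split_ifs with htv
  · rw [htv, hv]
  · by_contra ht
    exact htv (c.prop t v (Option.isSome_iff_ne_none.mpr ht) (by simp [hv]))

theorem eq_shiftX_headAtOrigin {c : X d n k} {v : V d} {q : Fin k} (hv : c.val.2 v = some q) :
    c = shiftX v (headAtOrigin (c.tapeFrom v) q) := by
  refine ext_cell fun t => Prod.ext ?_ ?_
  · simp [cell, shiftX, headAtOrigin, tapeFrom]
  · simp [cell, shiftX, headAtOrigin, sub_eq_zero, head_eq_ite hv t]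

theorem isInducing_cell : IsInducing (cell : X d n k → V d → Fin n × Option (Fin k)) := by
  have hpair : IsEmbedding fun (p : (V d → Fin n) × (V d → Option (Fin k))) v => (p.1 v, p.2 v) :=
    LeftInverse.isEmbedding (f := fun h => (fun v => (h v).1, fun v => (h v).2))
      (fun _ => rfl) (by fun_prop) (by fun_prop)
  exact hpair.isInducing.comp .subtypeVal

theorem isClosed_headOk : IsClosed {y : V d → Option (Fin k) | headOk y} := by
  simp only [headOk, Set.ofPred_forall]
  refine isClosed_iInter fun u => isClosed_iInter fun v => ?_
  exact (isClosed_discrete {p : Option (Fin k) × Option (Fin k) |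
    p.1.isSome → p.2.isSome → u = v}).preimage
      (f := fun y : V d → Option (Fin k) => (y u, y v)) (by fun_prop)

instance : CompactSpace (X d n k) :=
  have : CompactSpace (Option (Fin k)) := Finite.compactSpace
  isCompact_iff_compactSpace.mp (isClosed_headOk.preimage continuous_snd).isCompact

theorem eventually_cell_eq (c : X d n k) (W : Finset (V d)) :
    ∀ᶠ c' in 𝓝 c, ∀ v ∈ W, cell c' v = c.cell v :=
  (hasBasis_nhds_of_isInducing_pi isInducing_cell c).mem_of_mem W.finite_toSet

theorem continuous_of_eventually_cell_eq {Z : Type*} [TopologicalSpace Z] {φ : Z → X d n k}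
    (h : ∀ z t, ∀ᶠ z' in 𝓝 z, (φ z').cell t = (φ z).cell t) : Continuous φ :=
  isInducing_cell.continuous_iff.mpr <| continuous_pi fun t =>
    ((IsLocallyConstant.iff_eventually_eq _).mpr fun z => h z t).continuous

end X

open X

namespace DefinedBy

variable {F F' : Finset (V d)} {f : (V d → Fin n) → Fin k → (V d → Fin n) × Fin k × V d}
  {T : X d n k → X d n k}

theorem cell_apply (h : DefinedBy F F' f T) {c : X d n k} {v : V d} {q : Fin k}
    (hv : c.val.2 v = some q) (t : V d) :
    (T c).cell t =
      (if t - v ∈ F' then (f (c.tapeFrom v) q).1 (t - v) else c.val.1 t,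
        if t = v + (f (c.tapeFrom v) q).2.2 then some (f (c.tapeFrom v) q).2.1 else none) :=
  Prod.ext ((h.2.2 c v q hv).1 t) ((h.2.2 c v q hv).2 t)

theorem apply_mem_Y_iff (h : DefinedBy F F' f T) (c : X d n k) :
    T c ∈ Y d n k ↔ c ∈ Y d n k := by
  refine ⟨fun hTc => ?_, fun hc => (h.2.1 c hc).symm ▸ hc⟩
  by_contra hc
  obtain ⟨v, q, hv⟩ := exists_head_of_notMem_Y hc
  simpa [cell, hTc _] using h.cell_apply hv (v + (f (c.tapeFrom v) q).2.2)

theorem apply_shiftX (h : DefinedBy F F' f T) (u : V d) (c : X d n k) :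
    T (shiftX u c) = shiftX u (T c) := by
  by_cases hc : c ∈ Y d n k
  · rw [h.2.1 c hc, h.2.1 _ fun v => hc (v - u)]
  obtain ⟨v, q, hv⟩ := exists_head_of_notMem_Y hc
  have hv' : (shiftX u c).val.2 (v + u) = some q := by simpa [shiftX] using hv
  refine ext_cell fun t => ?_
  rw [cell_shiftX, h.cell_apply hv, h.cell_apply hv', tapeFrom_shiftX,
    show t - (v + u) = t - u - v by abel]
  simp only [shiftX, sub_eq_iff_eq_add, add_right_comm v u]

theorem finite_moves (h : DefinedBy F F' f T) :
    (⋃ q, Set.range fun x => (f x q).2.2).Finite :=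
  Set.finite_iUnion fun q => finite_range_of_dependsOn F.finite_toSet
    fun x x' hx => congrArg Prod.snd (h.1 x x' q hx).2

theorem exists_cell_apply_eq_of_head_far (h : DefinedBy F F' f T) :
    ∃ W : Finset (V d), ∀ c t, (∀ w ∈ W, c.val.2 (t - w) = none) →
      (T c).cell t = (c.val.1 t, none) := by
  refine ⟨F' ∪ h.finite_moves.toFinset, fun c t hfar => ?_⟩
  by_cases hc : c ∈ Y d n k
  · rw [h.2.1 c hc, cell, hc t]
  obtain ⟨v, q, hv⟩ := exists_head_of_notMem_Y hc
  have hnotMem : t - v ∉ F' ∪ h.finite_moves.toFinset := fun hmem => by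
    simpa [hv] using hfar (t - v) hmem
  rw [Finset.notMem_union, Set.Finite.mem_toFinset] at hnotMem
  rw [h.cell_apply hv, if_neg hnotMem.1, if_neg]
  rintro rfl
  exact hnotMem.2 (Set.mem_iUnion.mpr ⟨q, c.tapeFrom v, by simp⟩)

theorem continuous (h : DefinedBy F F' f T) : Continuous T := by
  refine continuous_of_eventually_cell_eq fun c t => ?_
  by_cases hc : c ∈ Y d n k
  · obtain ⟨W, hW⟩ := h.exists_cell_apply_eq_of_head_far
    filter_upwards [c.eventually_cell_eq (insert t (W.image (t - ·)))] with c' hc'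
    have hfar : ∀ w ∈ W, c'.val.2 (t - w) = none := fun w hw => by
      have hcell := hc' (t - w) (Finset.mem_insert_of_mem (Finset.mem_image_of_mem _ hw))
      exact (congrArg Prod.snd hcell).trans (hc _)
    have htape : c'.val.1 t = c.val.1 t := congrArg Prod.fst (hc' t (Finset.mem_insert_self _ _))
    rw [hW c' t hfar, h.2.1 c hc, cell, htape, hc t]
  · obtain ⟨v, q, hv⟩ := exists_head_of_notMem_Y hc
    filter_upwards [c.eventually_cell_eq ({t, v} ∪ F.image (· + v))] with c' hc'
    have hv' : c'.val.2 v = some q := (congrArg Prod.snd (hc' v (by simp))).trans hv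
    have htape : c'.val.1 t = c.val.1 t := congrArg Prod.fst (hc' t (by simp))
    have hwindow : ∀ u ∈ F, c'.tapeFrom v u = c.tapeFrom v u := fun u hu =>
      congrArg Prod.fst (hc' (u + v) (Finset.mem_union_right _ (Finset.mem_image_of_mem _ hu)))
    obtain ⟨hwrite, hmove⟩ := h.1 _ _ q hwindow
    rw [h.cell_apply hv, h.cell_apply hv', hmove, htape]
    congr 1
    split_ifs with ht
    · exact hwrite _ ht
    · rfl

end DefinedBy

theorem IsTM.isEndo {T : X d n k → X d n k} (h : IsTM T) : IsEndo T :=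
  let ⟨_, _, _, hf⟩ := h
  ⟨hf.continuous, hf.apply_shiftX⟩

theorem IsTM.apply_eq_of_mem_Y {T : X d n k → X d n k} (h : IsTM T) : ∀ c ∈ Y d n k, T c = c :=
  let ⟨_, _, _, hf⟩ := h
  hf.2.1

theorem IsTM.preimage_Y {T : X d n k → X d n k} (h : IsTM T) : T ⁻¹' Y d n k = Y d n k :=
  let ⟨_, _, _, hf⟩ := h
  Set.ext hf.apply_mem_Y_iff

/-- `W` is a memory set of `φ`, as for cellular automata: the cell at `t` of `φ c` only depends on
the cells of `c` in `W + t`. -/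
def IsMemorySet (W : Finset (V d)) (φ : X d n k → X d n k) : Prop :=
  ∀ t c c', (∀ v ∈ W, cell c (v + t) = cell c' (v + t)) → (φ c).cell t = (φ c').cell t

theorem IsEndo.exists_isMemorySet {φ : X d n k → X d n k} (h : IsEndo φ) :
    ∃ W, IsMemorySet W φ := by
  have hcont : Continuous fun c => (φ c).cell 0 :=
    (continuous_apply 0).comp (isInducing_cell.continuous.comp h.1)
  obtain ⟨W, hWfin, hW⟩ := exists_finite_eq_of_forall_eq isInducing_cell hcont
  refine ⟨hWfin.toFinset, fun t c c' hcc' => ?_⟩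
  have hzero := hW (shiftX (-t) c) (shiftX (-t) c') fun v hv => by
    simpa [cell_shiftX] using hcc' v (hWfin.mem_toFinset.mpr hv)
  simpa [h.2, cell_shiftX] using hzero

namespace IsMemorySet

open scoped Pointwise

variable {W : Finset (V d)} {φ : X d n k → X d n k}

theorem cell_apply_eq_of_head_far (hW : IsMemorySet W φ) (hY : ∀ c ∈ Y d n k, φ c = c)
    {c : X d n k} {t : V d} (hfar : ∀ w ∈ W, c.val.2 (w + t) = none) :
    (φ c).cell t = (c.val.1 t, none) := by
  rw [hW t c (headless c.val.1) fun w hw => Prod.ext rfl (hfar w hw), hY _ fun _ => rfl]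
  rfl

theorem cell_apply_headAtOrigin (hW : IsMemorySet W φ) (hY : ∀ c ∈ Y d n k, φ c = c)
    (x : V d → Fin n) (q : Fin k) {s : V d} (hs : s ∉ -W) :
    (φ (headAtOrigin x q)).cell s = (x s, none) :=
  hW.cell_apply_eq_of_head_far hY fun w hw => if_neg fun hws =>
    hs (Finset.mem_neg.mpr ⟨w, hw, neg_eq_of_add_eq_zero_right hws⟩)

theorem cell_apply_headAtOrigin_congr (hW : IsMemorySet W φ) {x x' : V d → Fin n} (q : Fin k)
    (hx : ∀ v ∈ W + -W, x v = x' v) {s : V d} (hs : s ∈ -W) :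
    (φ (headAtOrigin x q)).cell s = (φ (headAtOrigin x' q)).cell s :=
  hW s _ _ fun _ hw => Prod.ext (hx _ (Finset.add_mem_add hw hs)) rfl

theorem definedBy (hW : IsMemorySet W φ) (hφ : ∀ u c, φ (shiftX u c) = shiftX u (φ c))
    (hY : ∀ c ∈ Y d n k, φ c = c) {state : (V d → Fin n) → Fin k → Fin k}
    {move : (V d → Fin n) → Fin k → V d}
    (hhead : ∀ x q, (φ (headAtOrigin x q)).val.2 (move x q) = some (state x q)) :
    DefinedBy (W + -W) (-W)
      (fun x q => ((φ (headAtOrigin x q)).val.1, state x q, move x q)) φ := by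
  refine ⟨fun x x' q hx => ?_, hY, fun c v q hv => ?_⟩
  · have hcell {s : V d} (hs : s ∈ -W) := hW.cell_apply_headAtOrigin_congr q hx hs
    have hmove : move x q ∈ -W := by
      by_contra hmem
      have hnone := congrArg Prod.snd (hW.cell_apply_headAtOrigin hY x q hmem)
      simp [cell, hhead] at hnone
    have hhead' : (φ (headAtOrigin x' q)).val.2 (move x q) = some (state x q) :=
      (congrArg Prod.snd (hcell hmove)).symm.trans (hhead x q)
    rw [head_eq_ite (hhead x' q)] at hhead'
    simp only [Option.ite_none_right_eq_some, Option.some.injEq] at hhead'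
    exact ⟨fun s hs => congrArg Prod.fst (hcell hs), Prod.ext hhead'.2.symm hhead'.1⟩
  · have hshift : φ c = shiftX v (φ (headAtOrigin (c.tapeFrom v) q)) := by
      conv_lhs => rw [eq_shiftX_headAtOrigin hv, hφ]
    refine ⟨fun t => ?_, head_eq_ite ?_⟩
    · split_ifs with ht
      · rw [hshift]
        rfl
      · refine congrArg Prod.fst (hW.cell_apply_eq_of_head_far hY fun w hw => ?_)
        rw [head_eq_ite hv, if_neg]
        rintro rfl
        exact ht (by simpa using hw)
    · rw [hshift]
      exact (congrArg _ (add_sub_cancel_left _ _)).trans (hhead (c.tapeFrom v) q)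

end IsMemorySet

theorem IsEndo.isTM {φ : X d n k → X d n k} (h : IsEndo φ) (hY : ∀ c ∈ Y d n k, φ c = c)
    (hpre : φ ⁻¹' Y d n k = Y d n k) : IsTM φ := by
  have hhead (x : V d → Fin n) (q : Fin k) : ∃ v q', (φ (headAtOrigin x q)).val.2 v = some q' := by
    refine exists_head_of_notMem_Y fun hmem => ?_
    have hheadless : headAtOrigin x q ∈ Y d n k := hpre ▸ hmem
    simpa [headAtOrigin] using hheadless 0
  choose move state hhead using hhead
  obtain ⟨W, hW⟩ := h.exists_isMemorySet
  exact ⟨_, _, _, hW.definedBy h.2 hY hhead⟩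

theorem isTM_iff {T : X d n k → X d n k} :
    IsTM T ↔ IsEndo T ∧ (∀ c ∈ Y d n k, T c = c) ∧ T ⁻¹' Y d n k = Y d n k :=
  ⟨fun h => ⟨h.isEndo, h.apply_eq_of_mem_Y, h.preimage_Y⟩, fun ⟨h, hY, hpre⟩ => h.isTM hY hpre⟩

end TuringMachines

/-- `TM(ℤ^d,n,k)` is the set of endomorphisms of `X_{n,k}` fixing `Y` pointwise with
`φ⁻¹(Y) = Y`, and `RTM(ℤ^d,n,k)` is the set of automorphisms of `X_{n,k}`
(bijective endomorphisms whose inverse is also an endomorphism) fixing `Y` pointwise. -/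
theorem tm_eq_endos_fixing_headless (d n k : ℕ) (hd : 1 ≤ d) (hn : 1 ≤ n) (hk : 1 ≤ k) :
    ({T | IsTM T} =
      {φ : X d n k → X d n k | IsEndo φ ∧ (∀ c ∈ Y d n k, φ c = c) ∧
        φ ⁻¹' (Y d n k) = Y d n k}) ∧
    ({T | IsRTM T} =
      {φ : X d n k → X d n k | (Function.Bijective φ ∧ IsEndo φ ∧
        ∃ ψ : X d n k → X d n k, IsEndo ψ ∧ Function.LeftInverse ψ φ ∧
          Function.RightInverse ψ φ) ∧ (∀ c ∈ Y d n k, φ c = c)}) := by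
  refine ⟨Set.ext fun _ => isTM_iff, Set.ext fun φ => ⟨?_, ?_⟩⟩
  · rintro ⟨hφ, ψ, hψ, hleft, hright⟩
    have hl : LeftInverse ψ φ := congrFun hleft
    have hr : RightInverse ψ φ := congrFun hright
    exact ⟨⟨⟨hl.injective, hr.surjective⟩, hφ.isEndo, ψ, hψ.isEndo, hl, hr⟩, hφ.apply_eq_of_mem_Y⟩
  · rintro ⟨⟨-, hφ, ψ, hψ, hl, hr⟩, hY⟩
    have hψY : ∀ c ∈ Y d n k, ψ c = c := fun c hc => by simpa only [hY c hc] using hl c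
    exact ⟨hφ.isTM hY (preimage_eq_self_of_injective hl.injective hY), ψ,
      hψ.isTM hψY (preimage_eq_self_of_injective hr.injective hψY), hl.comp_eq_id, hr.comp_eq_id⟩
end

section
/- Let d, n, k ≥ 1. A map φ belongs to RTM(ℤ^d,n,k) if and only if φ belongs to TM(ℤ^d,n,k) and φ is bijective. -/
open Function

/-!
Call `T` a machine with window `W` if it fixes headless configurations, keeps the head, commutes
with shifts, and if every transition from a head at `v` survives an arbitrary change of the tape
outside `v + W`, the change being carried over to the output. A Turing machine is exactly a
machine with a finite window. All these conditions can be read backwards along `T`, except that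
the window is then attached to the new position of the head; since the head of `T` only makes
moves from a finite set `M`, the finite window `W - M` serves for the inverse of `T`.
-/

section

open scoped Pointwise

theorem vadd_finset_subset_vadd_sub {G : Type*} [AddCommGroup G] [DecidableEq G]
    {W M : Finset G} {a b : G} (h : b - a ∈ M) : a +ᵥ W ⊆ b +ᵥ (W - M) := by
  intro t ht
  obtain ⟨u, hu, rfl⟩ := Finset.mem_vadd_finset.1 ht
  refine Finset.mem_vadd_finset.2 ⟨u - (b - a), Finset.sub_mem_sub hu h, ?_⟩
  simp only [vadd_eq_add]
  abel

variable {d n k : ℕ}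

namespace X

/-- A configuration without a head. -/
def Headless (c : X d n k) : Prop :=
  ∀ v, c.val.2 v = none

/-- The configuration with tape `x` and head `h`, a pair (position, state). -/
def withHead (x : V d → Fin n) (h : V d × Fin k) : X d n k :=
  ⟨(x, fun t => if t = h.1 then some h.2 else none), by
    intro u v hu hv
    simp only [Option.isSome_ite] at hu hv
    rw [hu, hv]⟩

/-- The shift `σ_a`, acting on the tape and on the head. -/
def shift (a : V d) (c : X d n k) : X d n k :=
  ⟨(fun t => c.val.1 (t - a), fun t => c.val.2 (t - a)), fun _ _ hu hv =>
    sub_left_injective (c.property _ _ hu hv)⟩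

theorem withHead_inj {x y : V d → Fin n} {h h' : V d × Fin k} :
    withHead x h = withHead y h' ↔ x = y ∧ h = h' := by
  refine ⟨fun e => ?_, by rintro ⟨rfl, rfl⟩; rfl⟩
  have tape_eq : x = y := congrArg (fun c => c.val.1) e
  have head_eq : some h.2 = if h.1 = h'.1 then some h'.2 else none := by
    simpa [withHead] using congrFun (congrArg (fun c => c.val.2) e) h.1
  obtain ⟨hpos, hstate⟩ := Option.some_eq_ite_none_right.1 head_eq
  exact ⟨tape_eq, Prod.ext hpos (Option.some_injective _ hstate)⟩

theorem eq_withHead {c : X d n k} {v : V d} {q : Fin k} (hc : c.val.2 v = some q) :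
    c = withHead c.val.1 (v, q) := by
  refine Subtype.ext (Prod.ext rfl (funext fun t => ?_))
  by_cases ht : t = v
  · simp [withHead, ht, hc]
  · have unoccupied : c.val.2 t = none := by
      by_contra hne
      exact ht (c.property t v (Option.isSome_iff_ne_none.2 hne) (by simp [hc]))
    simp [withHead, ht, unoccupied]

theorem headless_or_exists_eq_withHead (c : X d n k) : c.Headless ∨ ∃ x h, c = withHead x h := by
  refine or_iff_not_imp_left.2 fun hc => ?_
  obtain ⟨v, hv⟩ := not_forall.1 hc
  obtain ⟨q, hq⟩ := Option.ne_none_iff_exists'.1 hv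
  exact ⟨_, _, eq_withHead hq⟩

theorem not_headless_withHead (x : V d → Fin n) (h : V d × Fin k) : ¬ (withHead x h).Headless :=
  fun hc => by simpa [withHead] using hc h.1

theorem Headless.shift {c : X d n k} (hc : c.Headless) (a : V d) : (shift a c).Headless :=
  fun v => hc (v - a)

theorem shift_withHead (a : V d) (x : V d → Fin n) (h : V d × Fin k) :
    shift a (withHead x h) = withHead (fun t => x (t - a)) (h.1 + a, h.2) := by
  simp only [shift, withHead, sub_eq_iff_eq_add]

end X

open X

/-- `ActsOn T A x h y h'`: whatever the tape is outside `A`, the map `T` replaces the contents `x`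
of `A` by those of `y`, leaves the rest of the tape alone and turns the head `h` into `h'`. -/
def ActsOn (T : X d n k → X d n k) (A : Finset (V d)) (x : V d → Fin n) (h : V d × Fin k)
    (y : V d → Fin n) (h' : V d × Fin k) : Prop :=
  ∀ z, T (withHead (A.piecewise x z) h) = withHead (A.piecewise y z) h'

namespace ActsOn

variable {T S : X d n k → X d n k} {A B : Finset (V d)} {x y : V d → Fin n} {h h' : V d × Fin k}

theorem eqOn_compl (hA : ActsOn T A x h y h') (hT : T (withHead x h) = withHead y h')
    {t : V d} (ht : t ∉ A) : y t = x t := by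
  have e : withHead y h' = withHead (A.piecewise y x) h' := by
    rw [← hT, ← hA x, Finset.piecewise_same]
  rw [(withHead_inj.1 e).1, A.piecewise_eq_of_notMem _ _ ht]

theorem mono (hA : ActsOn T A x h y h') (hT : T (withHead x h) = withHead y h') (hAB : A ⊆ B) :
    ActsOn T B x h y h' := by
  intro z
  have input : B.piecewise x z = A.piecewise x (B.piecewise x z) := by
    ext t
    by_cases ht : t ∈ A
    · simp [ht, hAB ht]
    · simp [ht]
  have output : A.piecewise y (B.piecewise x z) = B.piecewise y z := by
    ext t
    by_cases ht : t ∈ A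
    · simp [ht, hAB ht]
    · simp [Finset.piecewise, ht, hA.eqOn_compl hT ht]
  rw [input, hA, output]

theorem leftInverse (hA : ActsOn T A x h y h') (hS : LeftInverse S T) : ActsOn S A y h' x h :=
  fun z => by rw [← hA z, hS]

end ActsOn

/-- The intrinsic, rule-free description of a Turing machine whose rule reads and writes the tape
only on the window `W`, placed at the head. -/
structure IsMachineOn (W : Finset (V d)) (T : X d n k → X d n k) : Prop where
  fixes_headless : ∀ c : X d n k, c.Headless → T c = c
  exists_withHead : ∀ x h, ∃ y h', T (withHead x h) = withHead y h'
  semiconj_shift : ∀ a, Semiconj T (shift a) (shift a)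
  actsOn : ∀ {x h y h'}, T (withHead x h) = withHead y h' → ActsOn T (h.1 +ᵥ W) x h y h'

namespace DefinedBy

variable {F F' : Finset (V d)} {f : (V d → Fin n) → Fin k → (V d → Fin n) × Fin k × V d}
  {T : X d n k → X d n k}

theorem apply_withHead (hT : DefinedBy F F' f T) (x : V d → Fin n) (v : V d) (q : Fin k) :
    T (withHead x (v, q)) =
      withHead (fun t => if t - v ∈ F' then (f (fun u => x (u + v)) q).1 (t - v) else x t)
        (v + (f (fun u => x (u + v)) q).2.2, (f (fun u => x (u + v)) q).2.1) := by
  obtain ⟨tape, head⟩ := hT.2.2 (withHead x (v, q)) v q (by simp [withHead])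
  exact Subtype.ext (Prod.ext (funext tape) (funext head))

theorem semiconj_shift (hT : DefinedBy F F' f T) (a : V d) : Semiconj T (shift a) (shift a) := by
  intro c
  obtain hc | ⟨x, ⟨v, q⟩, rfl⟩ := c.headless_or_exists_eq_withHead
  · rw [hT.2.1 c hc, hT.2.1 _ (hc.shift a)]
  · have pattern_eq (u : V d) : u + (v + a) - a = u + v := by abel
    have cell_eq (t : V d) : t - a - v = t - (v + a) := by abel
    simp only [shift_withHead, hT.apply_withHead, pattern_eq, cell_eq, add_right_comm]

theorem actsOn (hT : DefinedBy F F' f T) {x y : V d → Fin n} {h h' : V d × Fin k}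
    (hxy : T (withHead x h) = withHead y h') : ActsOn T (h.1 +ᵥ (F ∪ F')) x h y h' := by
  obtain ⟨v, q⟩ := h
  rw [hT.apply_withHead, withHead_inj] at hxy
  obtain ⟨rfl, rfl⟩ := hxy
  intro z
  have mem_window {t : V d} : t ∈ v +ᵥ (F ∪ F') ↔ t - v ∈ F ∨ t - v ∈ F' := by
    rw [← Finset.neg_vadd_mem_iff, vadd_eq_add, neg_add_eq_sub, Finset.mem_union]
  obtain ⟨write_eq, move_eq⟩ := hT.1 (fun u => (v +ᵥ (F ∪ F')).piecewise x z (u + v))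
    (fun u => x (u + v)) q fun u hu =>
      Finset.piecewise_eq_of_mem _ _ _ (mem_window.2 (Or.inl (by simpa using hu)))
  rw [hT.apply_withHead, move_eq, withHead_inj]
  refine ⟨funext fun t => ?_, rfl⟩
  by_cases ht : t - v ∈ F'
  · rw [if_pos ht, write_eq _ ht, Finset.piecewise_eq_of_mem _ _ _ (mem_window.2 (Or.inr ht)),
      if_pos ht]
  · simp [Finset.piecewise, ht]

theorem isMachineOn (hT : DefinedBy F F' f T) : IsMachineOn (F ∪ F') T where
  fixes_headless := hT.2.1
  exists_withHead x h := ⟨_, _, hT.apply_withHead x h.1 h.2⟩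
  semiconj_shift := hT.semiconj_shift
  actsOn := hT.actsOn

theorem finite_range_move (hT : DefinedBy F F' f T) :
    (Set.range fun a : (V d → Fin n) × Fin k => (f a.1 a.2).2.2).Finite := by
  have factors : FactorsThrough (fun a : (V d → Fin n) × Fin k => (f a.1 a.2).2.2)
      (fun a => (F.restrict a.1, a.2)) := by
    rintro ⟨x, q⟩ ⟨x', q'⟩ e
    obtain ⟨hx, rfl⟩ := Prod.mk.inj e
    exact congrArg Prod.snd (hT.1 x x' q fun v hv => congrFun hx ⟨v, hv⟩).2
  obtain ⟨move, hmove⟩ := (factorsThrough_iff _).1 factors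
  rw [hmove]
  exact (Set.finite_range move).subset (Set.range_comp_subset_range _ move)

end DefinedBy

namespace IsMachineOn

variable {W M : Finset (V d)} {T S : X d n k → X d n k}

theorem actsOn_of_head_zero (hT : IsMachineOn W T) {x y : V d → Fin n} {q : Fin k}
    {h' : V d × Fin k} (hxy : T (withHead x (0, q)) = withHead y h') :
    ActsOn T W x (0, q) y h' := by
  simpa only [zero_vadd] using hT.actsOn hxy

theorem apply_withHead_of_eqOn (hT : IsMachineOn W T) {x x' y : V d → Fin n} {q : Fin k}
    {h' : V d × Fin k} (hxy : T (withHead x (0, q)) = withHead y h')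
    (hx : ∀ v ∈ W, x v = x' v) :
    T (withHead x' (0, q)) = withHead (W.piecewise y x') h' := by
  have input : W.piecewise x x' = x' :=
    (W.piecewise_congr hx fun _ _ => rfl).trans (W.piecewise_same x')
  rw [← hT.actsOn_of_head_zero hxy x', input]

theorem apply_withHead_translate (hT : IsMachineOn W T) {x y : V d → Fin n} {v : V d}
    {q : Fin k} {h' : V d × Fin k}
    (hxy : T (withHead (fun u => x (u + v)) (0, q)) = withHead y h') :
    T (withHead x (v, q)) = withHead (fun t => y (t - v)) (v + h'.1, h'.2) := by
  have e := hT.semiconj_shift v (withHead (fun u => x (u + v)) (0, q))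
  rw [hxy, shift_withHead, shift_withHead] at e
  simpa only [sub_add_cancel, zero_add, add_comm v] using e

theorem isTM (hT : IsMachineOn W T) : IsTM T := by
  choose y h' hyh using fun x q => hT.exists_withHead x (0, q)
  refine ⟨W, W, fun x q => (y x q, (h' x q).2, (h' x q).1), fun x x' q hx => ?_,
    hT.fixes_headless, fun c v q hc => ?_⟩
  · have e := hT.apply_withHead_of_eqOn (hyh x q) hx
    rw [hyh, withHead_inj] at e
    refine ⟨fun v hv => ?_, by simp only [e.2]⟩
    simp only [e.1, W.piecewise_eq_of_mem _ _ hv]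
  · set x := fun u => c.val.1 (u + v) with hx
    have hTc := hT.apply_withHead_translate (hyh x q)
    rw [← eq_withHead hc] at hTc
    rw [hTc]
    refine ⟨fun t => ?_, fun t => rfl⟩
    split_ifs with ht
    · rfl
    · calc y x q (t - v) = x (t - v) := (hT.actsOn_of_head_zero (hyh x q)).eqOn_compl (hyh x q) ht
        _ = c.val.1 t := by simp only [hx, sub_add_cancel]

theorem inverse (hT : IsMachineOn W T) (hl : LeftInverse S T) (hr : RightInverse S T)
    (hM : ∀ x h y h', T (withHead x h) = withHead y h' → h'.1 - h.1 ∈ M) :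
    IsMachineOn (W - M) S where
  fixes_headless c hc := by rw [← hT.fixes_headless c hc, hl, hT.fixes_headless c hc]
  exists_withHead y h' := by
    refine (S (withHead y h')).headless_or_exists_eq_withHead.resolve_left fun hc => ?_
    have fixed := hT.fixes_headless _ hc
    rw [hr] at fixed
    exact not_headless_withHead y h' (fixed ▸ hc)
  semiconj_shift a := (hT.semiconj_shift a).inverse_left hl hr
  actsOn {y h' x h} hS := by
    have hxy : T (withHead x h) = withHead y h' := by rw [← hS, hr]
    exact ((hT.actsOn hxy).mono hxy
      (vadd_finset_subset_vadd_sub (hM x h y h' hxy))).leftInverse hl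

end IsMachineOn

theorem IsTM.exists_finset_displacement {T : X d n k → X d n k} (hT : IsTM T) :
    ∃ M : Finset (V d), ∀ x h y h', T (withHead x h) = withHead y h' → h'.1 - h.1 ∈ M := by
  obtain ⟨F, F', f, hf⟩ := hT
  refine ⟨hf.finite_range_move.toFinset, fun x h y h' hxy => ?_⟩
  rw [hf.apply_withHead, withHead_inj] at hxy
  obtain ⟨-, rfl⟩ := hxy
  simp

theorem IsTM.inverse {T S : X d n k → X d n k} (hT : IsTM T) (hl : LeftInverse S T)
    (hr : RightInverse S T) : IsTM S := by
  obtain ⟨M, hM⟩ := hT.exists_finset_displacement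
  obtain ⟨F, F', f, hf⟩ := hT
  exact (hf.isMachineOn.inverse hl hr hM).isTM

end

/-- A map belongs to `RTM(ℤ^d,n,k)` iff it belongs to `TM(ℤ^d,n,k)` and is bijective. -/
theorem rtm_iff_tm_and_bijective (d n k : ℕ) (hd : 1 ≤ d) (hn : 1 ≤ n) (hk : 1 ≤ k)
    (T : X d n k → X d n k) :
    IsRTM T ↔ IsTM T ∧ Function.Bijective T := by
  constructor
  · rintro ⟨hT, S, -, hST, hTS⟩
    exact ⟨hT, bijective_iff_has_inverse.2 ⟨S, congrFun hST, congrFun hTS⟩⟩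
  · rintro ⟨hT, hb⟩
    obtain ⟨S, hl, hr⟩ := bijective_iff_has_inverse.1 hb
    exact ⟨hT, S, hT.inverse hl hr, funext hl, funext hr⟩
end

section
/- Let d, n, k ≥ 1. A function T : Σ^{ℤ^d} × Q → Σ^{ℤ^d} × Q is a moving tape (d,n,k)-Turing machine (i.e. is defined by some local rule) if and only if T is continuous and there exist a continuous function s : Σ^{ℤ^d} × Q → ℤ^d and a natural number a such that for every (x,q), the configurations T(x,q)_1 and σ_{s(x,q)}(x) agree at every coordinate v with ‖v‖_∞ ≥ a. -/
open Function

/-- The configuration space `Σ^{ℤ^d} × Q` of the moving-tape model. -/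
abbrev Cfg (d n k : ℕ) : Type := (V d → Fin n) × Fin k

/-- `TapeDefinedBy F F' f T` : `T` is the moving-tape Turing machine defined by the
local rule `f`: if `f(x|_F, q) = (p, q', u)` then `T(x,q) = (σ_u y, q')` where `y`
agrees with `x` outside `F'` and equals `p` on `F'`. -/
def TapeDefinedBy {d n k : ℕ} (F F' : Finset (V d))
    (f : (V d → Fin n) → Fin k → (V d → Fin n) × Fin k × V d)
    (T : Cfg d n k → Cfg d n k) : Prop :=
  -- `f` only depends on the restriction of the tape to `F`, and only the
  -- restriction of its tape output to `F'` matters: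
  (∀ x x' q, (∀ v ∈ F, x v = x' v) →
      (∀ v ∈ F', (f x q).1 v = (f x' q).1 v) ∧ (f x q).2 = (f x' q).2) ∧
  -- the machine equation:
  (∀ (x : V d → Fin n) (q : Fin k),
    (T (x, q)).2 = (f x q).2.1 ∧
    ∀ t, (T (x, q)).1 t =
      if t - (f x q).2.2 ∈ F' then (f x q).1 (t - (f x q).2.2)
      else x (t - (f x q).2.2))

/-- A moving-tape `(d,n,k)`-Turing machine. -/
def IsTMfix {d n k : ℕ} (T : Cfg d n k → Cfg d n k) : Prop :=
  ∃ F F' f, TapeDefinedBy F F' f T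

/-- The sup-norm `‖v‖_∞` of `v ∈ ℤ^d`, as a natural number. -/
def supnorm {d : ℕ} (v : V d) : ℕ := Finset.univ.sup fun i => (v i).natAbs

/-!
Over a finite alphabet, a map from configurations to a discrete space is continuous exactly when it
depends on finitely many cells, so a local rule is the same thing as a continuous map into its
discrete space of outputs. In the frame of the tape before the move, the machine only changes cells
of the fixed finite set `F'`. Since the move is continuous on a compact space, it takes finitely
many values, so passing to the frame after the move only replaces `F'` by another finite set; and
a subset of `ℤ^d` is finite exactly when `‖·‖_∞` is bounded on it.
-/

section DependsOn

variable {ι Q Y : Type*} {X : ι → Type*} [∀ i, TopologicalSpace (X i)]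
  [TopologicalSpace Q] [TopologicalSpace Y]

theorem exists_finset_dependsOn_of_continuous [∀ i, CompactSpace (X i)] [∀ i, T2Space (X i)]
    [DiscreteTopology Y] {g : (∀ i, X i) → Y} (hg : Continuous g) :
    ∃ F : Finset ι, DependsOn g F := by
  -- The pairs separated by `g` form a compact set, covered by the pairs separated by a coordinate.
  have hcompact : IsCompact {p : (∀ i, X i) × (∀ i, X i) | g p.1 = g p.2}ᶜ := by
    refine (IsOpen.isClosed_compl ?_).isCompact
    exact (isOpen_discrete {p : Y × Y | p.1 = p.2}).preimage (hg.prodMap hg)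
  obtain ⟨F, hF⟩ := hcompact.elim_finite_subcover
    (fun i => {p : (∀ i, X i) × (∀ i, X i) | p.1 i ≠ p.2 i})
    (fun i => isOpen_ne_fun (by fun_prop) (by fun_prop))
    (fun p hp => by
      obtain ⟨i, hi⟩ := Function.ne_iff.1 (fun h : p.1 = p.2 => hp (congrArg g h))
      exact Set.mem_iUnion.2 ⟨i, hi⟩)
  refine ⟨F, fun x y hxy => by_contra fun hne => ?_⟩
  obtain ⟨i, hi, hxyi⟩ := Set.mem_iUnion₂.1 (hF (show (x, y) ∈ _ from hne))
  exact hxyi (hxy i hi)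

theorem continuous_of_dependsOn [∀ i, DiscreteTopology (X i)] {g : (∀ i, X i) → Y}
    {F : Finset ι} (hg : DependsOn g F) : Continuous g := by
  refine ((IsLocallyConstant.iff_eventually_eq g).2 fun x => ?_).continuous
  have hcoord : ∀ i ∈ F, ∀ᶠ y in nhds x, y i = x i := fun i _ =>
    (continuous_apply i).continuousAt.eventually (IsOpen.mem_nhds (isOpen_discrete {x i}) rfl)
  filter_upwards [(Filter.eventually_all_finset F).2 hcoord] with y hy
  exact hg hy

theorem continuous_iff_exists_dependsOn_curry [∀ i, Finite (X i)]
    [∀ i, DiscreteTopology (X i)] [Finite Q] [DiscreteTopology Q] [DiscreteTopology Y]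
    {g : (∀ i, X i) × Q → Y} :
    Continuous g ↔ ∃ F : Finset ι, DependsOn (curry g) F := by
  refine ⟨fun hg => exists_finset_dependsOn_of_continuous (continuous_pi fun q => ?_), ?_⟩
  · exact hg.comp (.prodMk_left q)
  · rintro ⟨F, hF⟩
    exact continuous_prod_of_discrete_right.2 fun q =>
      (continuous_apply q).comp (continuous_of_dependsOn hF)

end DependsOn

section Shift

variable {G A C : Type*} [AddGroup G]

/-- The shift `σ_u` of configurations over a group `G`; on `ℤ^d` it moves the content of the tape
by `u`. -/
def shift (u : G) (x : G → A) : G → A := fun t => x (t - u)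

theorem shift_neg_shift (u : G) (x : G → A) : shift (-u) (shift u x) = x := by
  funext t
  simp [shift]

theorem shift_shift_neg (u : G) (x : G → A) : shift u (shift (-u) x) = x := by
  simpa using shift_neg_shift (-u) x

theorem continuous_shift [TopologicalSpace G] [DiscreteTopology G] [TopologicalSpace A] :
    Continuous fun p : G × (G → A) => shift p.1 p.2 :=
  continuous_prod_of_discrete_left.2 fun u => continuous_pi fun t => continuous_apply (t - u)

theorem exists_finset_eqOn_shift {s : C → G} (hs : (Set.range s).Finite) {x y : C → G → A}
    (h : ∃ S : Finset G, ∀ c, Set.EqOn (x c) (y c) (S : Set G)ᶜ) :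
    ∃ S : Finset G, ∀ c, Set.EqOn (shift (s c) (x c)) (shift (s c) (y c)) (S : Set G)ᶜ := by
  classical
  obtain ⟨S, hS⟩ := h
  refine ⟨Finset.image₂ (· + ·) S hs.toFinset, fun c t ht => hS c fun htS => ht ?_⟩
  exact Finset.mem_image₂.2 ⟨t - s c, htS, s c, by simp, sub_add_cancel t (s c)⟩

theorem exists_finset_eqOn_shift_neg_iff {s : C → G} (hs : (Set.range s).Finite)
    {x y : C → G → A} :
    (∃ S : Finset G, ∀ c, Set.EqOn (shift (-s c) (x c)) (y c) (S : Set G)ᶜ) ↔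
      ∃ S : Finset G, ∀ c, Set.EqOn (x c) (shift (s c) (y c)) (S : Set G)ᶜ := by
  constructor <;> intro h
  · simpa only [shift_shift_neg] using exists_finset_eqOn_shift hs h
  · have hneg : (Set.range fun c => -s c).Finite := by
      simpa only [← Set.range_comp, comp_def] using hs.image Neg.neg
    simpa only [shift_neg_shift] using exists_finset_eqOn_shift hneg h

end Shift

theorem finite_setOf_supnorm_lt {d : ℕ} (a : ℕ) : {v : V d | supnorm v < a}.Finite := by
  refine (Set.finite_Icc (fun _ => -(a : ℤ)) fun _ => (a : ℤ)).subset fun v hv => ?_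
  have hcoord (i : Fin d) : (v i).natAbs < a :=
    (Finset.le_sup (f := fun i => (v i).natAbs) (Finset.mem_univ i)).trans_lt hv
  exact ⟨fun i => by grind, fun i => by grind⟩

theorem exists_forall_le_supnorm_iff {C : Type*} {d : ℕ} {P : C → V d → Prop} :
    (∃ a, ∀ c v, a ≤ supnorm v → P c v) ↔ ∃ S : Finset (V d), ∀ c, ∀ v ∉ S, P c v := by
  constructor
  · rintro ⟨a, ha⟩
    exact ⟨(finite_setOf_supnorm_lt a).toFinset, fun c v hv => ha c v (by simpa using hv)⟩
  · rintro ⟨S, hS⟩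
    refine ⟨S.sup supnorm + 1, fun c v hv => hS c v fun hvS => ?_⟩
    exact absurd (Finset.le_sup (f := supnorm) hvS) (by omega)

section Machine

variable {d n k : ℕ} {T : Cfg d n k → Cfg d n k} {F F' : Finset (V d)}
  {f : (V d → Fin n) → Fin k → (V d → Fin n) × Fin k × V d}

theorem tapeDefinedBy_iff :
    TapeDefinedBy F F' f T ↔
      DependsOn (fun x q => (F'.restrict (f x q).1, (f x q).2)) F ∧
      ∀ x q, T (x, q) = (shift (f x q).2.2 (F'.piecewise (f x q).1 x), (f x q).2.1) := by
  refine and_congr ?_ (forall₂_congr fun x q => ?_)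
  · constructor
    · intro h x x' hxx'
      funext q
      obtain ⟨hwrite, hmove⟩ := h x x' q hxx'
      exact Prod.ext (funext fun v => hwrite v v.2) hmove
    · intro h x x' q hxx'
      obtain ⟨hwrite, hmove⟩ := Prod.ext_iff.1 (congrFun (h hxx') q)
      exact ⟨fun v hv => congrFun hwrite ⟨v, hv⟩, hmove⟩
  · simp only [Prod.ext_iff, funext_iff, shift, Finset.piecewise, and_comm]

theorem TapeDefinedBy.continuous_rule (h : TapeDefinedBy F F' f T) :
    Continuous fun c : Cfg d n k => (F'.restrict (f c.1 c.2).1, (f c.1 c.2).2) :=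
  continuous_iff_exists_dependsOn_curry.2 ⟨F, (tapeDefinedBy_iff.1 h).1⟩

theorem TapeDefinedBy.continuous_move (h : TapeDefinedBy F F' f T) :
    Continuous fun c : Cfg d n k => (f c.1 c.2).2.2 :=
  h.continuous_rule.snd.snd

theorem TapeDefinedBy.continuous_piecewise (h : TapeDefinedBy F F' f T) :
    Continuous fun c : Cfg d n k => F'.piecewise (f c.1 c.2).1 c.1 := by
  refine continuous_pi fun v => ?_
  by_cases hv : v ∈ F'
  · simp only [F'.piecewise_eq_of_mem _ _ hv]
    exact (continuous_apply (⟨v, hv⟩ : F')).comp h.continuous_rule.fst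
  · simp only [F'.piecewise_eq_of_notMem _ _ hv]
    exact (continuous_apply v).comp continuous_fst

theorem TapeDefinedBy.continuous (h : TapeDefinedBy F F' f T) : Continuous T := by
  have hT : T = fun c => (shift (f c.1 c.2).2.2 (F'.piecewise (f c.1 c.2).1 c.1),
      (f c.1 c.2).2.1) := funext fun c => (tapeDefinedBy_iff.1 h).2 c.1 c.2
  rw [hT]
  exact (continuous_shift.comp (h.continuous_move.prodMk h.continuous_piecewise)).prodMk
    h.continuous_rule.snd.fst

theorem TapeDefinedBy.eqOn_shift_neg (h : TapeDefinedBy F F' f T) (c : Cfg d n k) :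
    Set.EqOn (shift (-(f c.1 c.2).2.2) (T c).1) c.1 (F' : Set (V d))ᶜ := by
  intro v hv
  rw [(tapeDefinedBy_iff.1 h).2 c.1 c.2, shift_neg_shift]
  exact F'.piecewise_eq_of_notMem _ _ hv

theorem isTMfix_of_eqOn_shift_neg (hT : Continuous T) {s : Cfg d n k → V d} (hs : Continuous s)
    (h : ∀ c, Set.EqOn (shift (-s c) (T c).1) c.1 (F' : Set (V d))ᶜ) : IsTMfix T := by
  have hy : Continuous fun c => shift (-s c) (T c).1 :=
    continuous_shift.comp (hs.neg.prodMk hT.fst)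
  obtain ⟨F, hF⟩ := continuous_iff_exists_dependsOn_curry.1
    (((Finset.continuous_restrict F').comp hy).prodMk (hT.snd.prodMk hs))
  refine ⟨F, F', fun x q => (shift (-s (x, q)) (T (x, q)).1, (T (x, q)).2, s (x, q)),
    tapeDefinedBy_iff.2 ⟨hF, fun x q => ?_⟩⟩
  have hwrite : F'.piecewise (shift (-s (x, q)) (T (x, q)).1) x =
      shift (-s (x, q)) (T (x, q)).1 := by
    funext v
    by_cases hv : v ∈ F'
    · simp only [F'.piecewise_eq_of_mem _ _ hv]
    · simpa only [F'.piecewise_eq_of_notMem _ _ hv] using (h (x, q) hv).symm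
  simp only [hwrite, shift_shift_neg]

theorem isTMfix_iff_eqOn_shift_neg :
    IsTMfix T ↔ Continuous T ∧ ∃ s : Cfg d n k → V d, Continuous s ∧
      ∃ S : Finset (V d), ∀ c, Set.EqOn (shift (-s c) (T c).1) c.1 (S : Set (V d))ᶜ := by
  constructor
  · rintro ⟨F, F', f, h⟩
    exact ⟨h.continuous, _, h.continuous_move, F', h.eqOn_shift_neg⟩
  · rintro ⟨hT, s, hs, F', h⟩
    exact isTMfix_of_eqOn_shift_neg hT hs h

end Machine

/-- A function `T : Σ^{ℤ^d} × Q → Σ^{ℤ^d} × Q` is a moving-tape Turing machine iff it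
is continuous and there are a continuous `s : Σ^{ℤ^d} × Q → ℤ^d` and `a : ℕ` such that
for every `(x,q)`, the tape `T(x,q)₁` agrees with `σ_{s(x,q)}(x)` at every coordinate
`v` with `‖v‖_∞ ≥ a`. -/
theorem movingTape_dynamical_characterization (d n k : ℕ)
    (hd : 1 ≤ d) (hn : 1 ≤ n) (hk : 1 ≤ k) (T : Cfg d n k → Cfg d n k) :
    IsTMfix T ↔
      (Continuous T ∧ ∃ (s : Cfg d n k → V d) (a : ℕ), Continuous s ∧
        ∀ (c : Cfg d n k) (v : V d), a ≤ supnorm v → (T c).1 v = c.1 (v - s c)) := by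
  rw [isTMfix_iff_eqOn_shift_neg]
  refine and_congr_right fun _ => exists_congr fun s => ?_
  rw [exists_and_left]
  refine and_congr_right fun hs => ?_
  have hfinite : (Set.range s).Finite := (isCompact_range hs).finite_of_discrete
  calc (∃ S : Finset (V d), ∀ c, Set.EqOn (shift (-s c) (T c).1) c.1 (S : Set (V d))ᶜ)
    _ ↔ ∃ S : Finset (V d), ∀ c, Set.EqOn (T c).1 (shift (s c) c.1) (S : Set (V d))ᶜ :=
      exists_finset_eqOn_shift_neg_iff hfinite
    _ ↔ ∃ a, ∀ c v, a ≤ supnorm v → (T c).1 v = shift (s c) c.1 v :=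
      exists_forall_le_supnorm_iff.symm
end

section
/- Let d, n, k ≥ 1 and let T ∈ TM_fix(ℤ^d,n,k). The following are equivalent: (1) T is injective; (2) T is surjective; (3) T is bijective, i.e. T ∈ RTM_fix(ℤ^d,n,k); (4) μ(T^{-1}(A)) = μ(A) for every Borel set A ⊆ Σ^{ℤ^d} × Q; (5) μ(T(A)) = μ(A) for every Borel set A ⊆ Σ^{ℤ^d} × Q. -/
open Function

/-!
On each of finitely many clopen pieces a Turing machine acts by a homeomorphism preserving `μ`: a
transposition of window contents followed by a translation. Hence the push-forward `T_* μ` has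
density `N`, the number of preimages, with respect to `μ`; moreover `N` is continuous and
`∫ N dμ = μ(X)` is finite. If `N ≤ 1` or `N ≥ 1` almost everywhere, equality of the integrals gives
`N = 1` almost everywhere, and then everywhere because `μ` has full support. Injectivity,
surjectivity, `T_* μ = μ` and `μ(T(X)) = μ(X)` are each instances of such a bound on `N`.
-/

section Piecewise

open MeasureTheory Set
open scoped ENNReal

variable {X : Type*} {T : X → X}

/-- The number of preimages of `y` under `T`, as an extended nonnegative real so that it can serve
as a density. -/
noncomputable def preimageCount (T : X → X) (y : X) : ℝ≥0∞ := (T ⁻¹' {y}).encard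

theorem preimageCount_le_one_iff_injective : preimageCount T ≤ 1 ↔ Injective T := by
  simp only [Pi.le_def, preimageCount, Pi.one_apply, ← ENat.toENNReal_one, ENat.toENNReal_le,
    encard_le_one_iff, mem_preimage, mem_singleton_iff]
  exact ⟨fun h a b hab => h (T b) a b hab rfl, fun h y a b ha hb => h (ha.trans hb.symm)⟩

theorem one_le_preimageCount_iff {y : X} : 1 ≤ preimageCount T y ↔ y ∈ range T := by
  rw [preimageCount, ← ENat.toENNReal_one, ENat.toENNReal_le, one_le_encard_iff_nonempty,
    preimage_singleton_nonempty]

theorem one_le_preimageCount_iff_surjective : 1 ≤ preimageCount T ↔ Surjective T :=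
  forall_congr' fun _ => one_le_preimageCount_iff

theorem preimageCount_eq_one_iff_bijective : preimageCount T = 1 ↔ Bijective T := by
  rw [le_antisymm_iff, preimageCount_le_one_iff_injective, one_le_preimageCount_iff_surjective,
    Bijective]

variable [TopologicalSpace X] {φ : X → X ≃ₜ X}

/-- `T` is glued from homeomorphisms: it acts at `x` by the homeomorphism `φ x`, and `φ` is locally
constant. -/
structure IsPiecewiseHomeomorph (T : X → X) (φ : X → X ≃ₜ X) : Prop where
  isLocallyConstant : IsLocallyConstant φ
  apply_eq : ∀ x, T x = φ x x

/-- The image of the set where `φ` takes the value `e` under the homeomorphism `e` applied there. -/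
def pieceImage (φ : X → X ≃ₜ X) (e : X ≃ₜ X) : Set X := e '' (φ ⁻¹' {e})

theorem mem_pieceImage {e : X ≃ₜ X} {y : X} : y ∈ pieceImage φ e ↔ φ (e.symm y) = e := by
  rw [pieceImage, e.image_eq_preimage_symm]
  rfl

namespace IsPiecewiseHomeomorph

theorem isClopen_pieceImage (h : IsPiecewiseHomeomorph T φ) (e : X ≃ₜ X) :
    IsClopen (pieceImage φ e) := by
  rw [pieceImage, e.image_eq_preimage_symm]
  exact (h.isLocallyConstant.isClopen_fiber e).preimage e.symm.continuous

theorem isLocalHomeomorph (h : IsPiecewiseHomeomorph T φ) : IsLocalHomeomorph T :=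
  IsLocalHomeomorph.mk T fun x =>
    ⟨(φ x).toOpenPartialHomeomorphOfImageEq {x' | φ x' = φ x}
        (h.isLocallyConstant.isOpen_fiber _) _ rfl,
      rfl, fun x' (hx' : φ x' = φ x) => (h.apply_eq x').trans (by rw [hx']; rfl)⟩

theorem image_preimage_singleton (h : IsPiecewiseHomeomorph T φ) (y : X) :
    φ '' (T ⁻¹' {y}) = {e | y ∈ pieceImage φ e} := by
  ext e
  rw [mem_ofPred_eq, mem_pieceImage]
  constructor
  · rintro ⟨x, rfl, rfl⟩
    rw [h.apply_eq, Homeomorph.symm_apply_apply]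
  · intro he
    refine ⟨e.symm y, ?_, he⟩
    rw [mem_preimage, h.apply_eq, he, Homeomorph.apply_symm_apply, mem_singleton_iff]

theorem injOn_preimage_singleton (h : IsPiecewiseHomeomorph T φ) (y : X) :
    InjOn φ (T ⁻¹' {y}) := fun a ha b hb hab =>
  (φ a).injective <| by
    rw [← h.apply_eq, hab, ← h.apply_eq, mem_singleton_iff.1 ha, mem_singleton_iff.1 hb]

section Compact

variable [CompactSpace X]

/-- The finitely many homeomorphisms from which `T` is glued. -/
noncomputable def pieces (h : IsPiecewiseHomeomorph T φ) : Finset (X ≃ₜ X) :=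
  h.isLocallyConstant.range_finite.toFinset

theorem mem_pieces (h : IsPiecewiseHomeomorph T φ) {e : X ≃ₜ X} :
    e ∈ h.pieces ↔ ∃ x, φ x = e :=
  h.isLocallyConstant.range_finite.mem_toFinset

theorem preimageCount_eq_sum (h : IsPiecewiseHomeomorph T φ) :
    preimageCount T = fun y => ∑ e ∈ h.pieces, (pieceImage φ e).indicator 1 y := by
  classical
  funext y
  have himage : φ '' (T ⁻¹' {y}) = ↑{e ∈ h.pieces | y ∈ pieceImage φ e} := by
    rw [h.image_preimage_singleton]
    ext e
    simpa [mem_pieces, mem_pieceImage] using fun he => ⟨_, he⟩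
  simp only [indicator_apply, Pi.one_apply, Finset.sum_boole]
  rw [preimageCount, ← (h.injOn_preimage_singleton y).encard_image, himage,
    encard_coe_eq_coe_finsetCard, ENat.toENNReal_coe]

theorem continuous_preimageCount (h : IsPiecewiseHomeomorph T φ) :
    Continuous (preimageCount T) := by
  rw [h.preimageCount_eq_sum]
  refine continuous_finsetSum _ fun e _ => continuous_one.indicator ?_
  simp [(h.isClopen_pieceImage e).frontier_eq]

variable [MeasurableSpace X] {μ : Measure X}

theorem bijective_of_ae_eq_one [μ.IsOpenPosMeasure] (h : IsPiecewiseHomeomorph T φ)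
    (hae : preimageCount T =ᵐ[μ] 1) : Bijective T :=
  preimageCount_eq_one_iff_bijective.1 <|
    (h.continuous_preimageCount.ae_eq_iff_eq μ continuous_one).1 hae

variable [BorelSpace X]

theorem map_eq_withDensity_preimageCount (h : IsPiecewiseHomeomorph T φ)
    (hμ : ∀ x, MeasurePreserving (φ x) μ μ) :
    μ.map T = μ.withDensity (preimageCount T) := by
  have hT : Measurable T := h.isLocalHomeomorph.continuous.measurable
  have hfiber (e : X ≃ₜ X) : MeasurableSet (φ ⁻¹' {e}) :=
    (h.isLocallyConstant.isOpen_fiber e).measurableSet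
  have himage (e : X ≃ₜ X) : MeasurableSet (pieceImage φ e) :=
    (h.isClopen_pieceImage e).isOpen.measurableSet
  have hpiece (A : Set X) (e : X ≃ₜ X) : φ ⁻¹' {e} ∩ T ⁻¹' A = e ⁻¹' (pieceImage φ e ∩ A) := by
    ext x
    simp +contextual [h.apply_eq, mem_pieceImage]
  have hpreserving {e : X ≃ₜ X} (he : e ∈ h.pieces) : MeasurePreserving e μ μ := by
    obtain ⟨x, rfl⟩ := h.mem_pieces.1 he
    exact hμ x
  ext A hA
  calc μ.map T A
      = μ.restrict (T ⁻¹' A) (φ ⁻¹' h.pieces) := by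
        rw [Measure.map_apply hT hA,
          eq_univ_of_forall (s := φ ⁻¹' h.pieces) fun x => h.mem_pieces.2 ⟨x, rfl⟩,
          Measure.restrict_apply_univ]
    _ = ∑ e ∈ h.pieces, μ (φ ⁻¹' {e} ∩ T ⁻¹' A) := by
        rw [← sum_measure_preimage_singleton _ fun e _ => hfiber e]
        exact Finset.sum_congr rfl fun e _ => Measure.restrict_apply (hfiber e)
    _ = ∑ e ∈ h.pieces, μ (pieceImage φ e ∩ A) :=
        Finset.sum_congr rfl fun e he => by
          rw [hpiece, (hpreserving he).measure_preimage ((himage e).inter hA).nullMeasurableSet]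
    _ = ∑ e ∈ h.pieces, ∫⁻ y in A, (pieceImage φ e).indicator 1 y ∂μ :=
        Finset.sum_congr rfl fun e _ => by
          rw [lintegral_indicator_one (himage e), Measure.restrict_apply (himage e)]
    _ = μ.withDensity (preimageCount T) A := by
        rw [withDensity_apply _ hA, h.preimageCount_eq_sum,
          lintegral_finsetSum _ fun e _ => measurable_one.indicator (himage e)]

theorem lintegral_preimageCount (h : IsPiecewiseHomeomorph T φ)
    (hμ : ∀ x, MeasurePreserving (φ x) μ μ) : ∫⁻ y, preimageCount T y ∂μ = μ univ := by
  rw [← setLIntegral_univ, ← withDensity_apply _ .univ, ← h.map_eq_withDensity_preimageCount hμ,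
    Measure.map_apply h.isLocalHomeomorph.continuous.measurable .univ, preimage_univ]

theorem measurePreserving_of_bijective (h : IsPiecewiseHomeomorph T φ)
    (hμ : ∀ x, MeasurePreserving (φ x) μ μ) (hT : Bijective T) : MeasurePreserving T μ μ where
  measurable := h.isLocalHomeomorph.continuous.measurable
  map_eq := by
    rw [h.map_eq_withDensity_preimageCount hμ, preimageCount_eq_one_iff_bijective.2 hT,
      withDensity_one]

variable [IsFiniteMeasure μ] [μ.IsOpenPosMeasure]

theorem bijective_of_ae_le_one (h : IsPiecewiseHomeomorph T φ)
    (hμ : ∀ x, MeasurePreserving (φ x) μ μ) (hle : preimageCount T ≤ᵐ[μ] 1) : Bijective T :=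
  h.bijective_of_ae_eq_one (μ := μ) <| ae_eq_of_ae_le_of_lintegral_le hle
    (by simp [h.lintegral_preimageCount hμ]) aemeasurable_one
    (by simp [h.lintegral_preimageCount hμ])

theorem bijective_of_one_ae_le (h : IsPiecewiseHomeomorph T φ)
    (hμ : ∀ x, MeasurePreserving (φ x) μ μ) (hle : 1 ≤ᵐ[μ] preimageCount T) : Bijective T :=
  h.bijective_of_ae_eq_one (μ := μ) <| .symm <| ae_eq_of_ae_le_of_lintegral_le hle
    (by simp) h.continuous_preimageCount.aemeasurable (by simp [h.lintegral_preimageCount hμ])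

theorem bijective_of_measurePreserving (h : IsPiecewiseHomeomorph T φ)
    (hμ : ∀ x, MeasurePreserving (φ x) μ μ) (hT : MeasurePreserving T μ μ) : Bijective T := by
  refine h.bijective_of_ae_eq_one (μ := μ) <|
    (withDensity_eq_iff h.continuous_preimageCount.aemeasurable aemeasurable_one ?_).1 ?_
  · simp [h.lintegral_preimageCount hμ]
  · rw [← h.map_eq_withDensity_preimageCount hμ, hT.map_eq]
    exact withDensity_one.symm

theorem bijective_of_measure_range_eq (h : IsPiecewiseHomeomorph T φ)
    (hμ : ∀ x, MeasurePreserving (φ x) μ μ) (hrange : μ (range T) = μ univ) : Bijective T := by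
  refine h.bijective_of_one_ae_le hμ ((ae_iff_measure_eq ?_).2 ?_)
  · exact (measurableSet_le measurable_one
      h.continuous_preimageCount.measurable).nullMeasurableSet
  · simpa only [Pi.one_apply, one_le_preimageCount_iff, ofPred_mem_eq] using hrange

end Compact

end IsPiecewiseHomeomorph

end Piecewise

section Window

open MeasureTheory Set Filter
open scoped ENNReal

variable {ι A Q : Type*} {E F G : Finset ι} {c z : (ι → A) × Q}

/-- The part of the tape visible through the finite window `F`, together with the state. Its fibres
are the cylinder sets. -/
def window (F : Finset ι) (c : (ι → A) × Q) : (F → A) × Q := (F.restrict c.1, c.2)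

theorem window_eq_window_iff :
    window F c = window F z ↔ (∀ v ∈ F, c.1 v = z.1 v) ∧ c.2 = z.2 := by
  simp only [window, Prod.mk.injEq, funext_iff, Finset.restrict, Subtype.forall]

theorem window_eq_window_of_subset (hFG : F ⊆ G) (h : window G c = window G z) :
    window F c = window F z := by
  rw [window_eq_window_iff] at h ⊢
  exact ⟨fun v hv => h.1 v (hFG hv), h.2⟩

section Overwrite

variable [DecidableEq ι]

/-- Replace the contents of the window `F` of `c`, and its state, by `p`. -/
def overwrite (F : Finset ι) (p : (F → A) × Q) (c : (ι → A) × Q) : (ι → A) × Q :=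
  (updateFinset c.1 F p.1, p.2)

theorem window_overwrite (p : (F → A) × Q) : window F (overwrite F p c) = p :=
  Prod.ext (restrict_updateFinset c.1 p.1) rfl

theorem overwrite_overwrite (p p' : (F → A) × Q) :
    overwrite F p (overwrite F p' c) = overwrite F p c :=
  Prod.ext (updateFinset_updateFinset_of_subset subset_rfl c.1 p'.1 p.1) rfl

theorem overwrite_window (h : ∀ v ∉ F, c.1 v = z.1 v) : overwrite F (window F z) c = z :=
  Prod.ext (funext fun v => by
    by_cases hv : v ∈ F
    · simp [overwrite, window, updateFinset, hv]
    · simp [overwrite, updateFinset, hv, h v hv]) rfl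

theorem window_overwrite_eq_window_overwrite (f : (E → A) × Q → (E → A) × Q) (hEF : E ⊆ F)
    (h : window F c = window F z) :
    window F (overwrite E (f (window E c)) c) = window F (overwrite E (f (window E z)) z) := by
  rw [window_eq_window_of_subset hEF h]
  rw [window_eq_window_iff] at h ⊢
  refine ⟨fun v hv => ?_, rfl⟩
  simp only [overwrite, updateFinset, h.1 v hv]

end Overwrite

section Topology

variable [TopologicalSpace A] [TopologicalSpace Q]

theorem continuous_window : Continuous (window F : (ι → A) × Q → _) := by
  unfold window
  fun_prop

theorem exists_preimage_window_subset {U : Set ((ι → A) × Q)} (hU : IsOpen U) (hz : z ∈ U) :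
    ∃ F : Finset ι, window F ⁻¹' {window F z} ⊆ U := by
  obtain ⟨s, t, hs, -, hzs, hzt, hst⟩ := isOpen_prod_iff.1 hU z.1 z.2 hz
  obtain ⟨F, u, hzu, hus⟩ := isOpen_pi_iff.1 hs z.1 hzs
  refine ⟨F, fun c hc => hst ?_⟩
  obtain ⟨htape, hstate⟩ := window_eq_window_iff.1 hc
  exact ⟨hus fun v hv => htape v hv ▸ (hzu v hv).2, hstate ▸ hzt⟩

/-- The homeomorphism moving the symbol at each cell `v` to the cell `π v`; a translation of the
tape is the case of a translation `π`. -/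
def moveCells (π : Equiv.Perm ι) : (ι → A) × Q ≃ₜ (ι → A) × Q where
  toFun c := (c.1 ∘ π.symm, c.2)
  invFun c := (c.1 ∘ π, c.2)
  left_inv c := Prod.ext (by simp [comp_assoc]) rfl
  right_inv c := Prod.ext (by simp [comp_assoc]) rfl
  continuous_toFun := by fun_prop
  continuous_invFun := by fun_prop

theorem window_moveCells_eq_iff (π : Equiv.Perm ι) :
    window F (moveCells π c) = window F (moveCells π z) ↔
      window (F.map π.symm.toEmbedding) c = window (F.map π.symm.toEmbedding) z := by
  rw [window_eq_window_iff, window_eq_window_iff, Finset.forall_mem_map]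
  rfl

variable [DiscreteTopology A] [DiscreteTopology Q]

theorem isOpen_preimage_window (s : Set ((F → A) × Q)) : IsOpen (window F ⁻¹' s) :=
  (isOpen_discrete s).preimage continuous_window

theorem isLocallyConstant_of_window {β : Type*} {f : (ι → A) × Q → β} (F : Finset ι)
    (hf : ∀ c z, window F c = window F z → f c = f z) : IsLocallyConstant f :=
  (IsLocallyConstant.iff_exists_open f).2 fun z =>
    ⟨window F ⁻¹' {window F z}, isOpen_preimage_window _, rfl, fun c hc => hf c z hc⟩

variable [DecidableEq ι]

theorem continuous_overwrite (f : (F → A) × Q → (F → A) × Q) :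
    Continuous fun c : (ι → A) × Q => overwrite F (f (window F c)) c := by
  have hf : Continuous fun c : (ι → A) × Q => f (window F c) :=
    continuous_of_discreteTopology.comp continuous_window
  refine .prodMk (continuous_pi fun v => ?_) (continuous_snd.comp hf)
  by_cases hv : v ∈ F
  · simpa only [updateFinset, hv, dite_true] using
      (continuous_apply (⟨v, hv⟩ : F)).comp' (continuous_fst.comp' hf)
  · simpa only [updateFinset, hv, dite_false] using (continuous_apply v).comp' continuous_fst

/-- The homeomorphism applying the permutation `σ` to the contents of the window `E` and the
state. -/
def permuteWindow (E : Finset ι) (σ : Equiv.Perm ((E → A) × Q)) :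
    (ι → A) × Q ≃ₜ (ι → A) × Q where
  toFun c := overwrite E (σ (window E c)) c
  invFun c := overwrite E (σ.symm (window E c)) c
  left_inv c := by simp [window_overwrite, overwrite_overwrite, overwrite_window]
  right_inv c := by simp [window_overwrite, overwrite_overwrite, overwrite_window]
  continuous_toFun := continuous_overwrite σ
  continuous_invFun := continuous_overwrite σ.symm

theorem window_permuteWindow_eq_iff (hEF : E ⊆ F) (σ : Equiv.Perm ((E → A) × Q)) :
    window F (permuteWindow E σ c) = window F (permuteWindow E σ z) ↔
      window F c = window F z := by
  refine ⟨fun h => ?_, window_overwrite_eq_window_overwrite σ hEF⟩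
  have := window_overwrite_eq_window_overwrite σ.symm hEF h
  rwa [← (permuteWindow E σ).symm_apply_apply c, ← (permuteWindow E σ).symm_apply_apply z]

theorem permuteWindow_swap [DecidableEq ((E → A) × Q)] (h : ∀ v ∉ E, c.1 v = z.1 v) :
    permuteWindow E (Equiv.swap (window E c) (window E z)) c = z := by
  change overwrite E (Equiv.swap (window E c) (window E z) (window E c)) c = z
  rw [Equiv.swap_apply_left, overwrite_window h]

end Topology

section Measure

variable [MeasurableSpace A] [MeasurableSpace Q]

theorem measurable_window : Measurable (window F : (ι → A) × Q → _) := by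
  unfold window
  fun_prop

theorem measure_ext_of_map_window {μ ν : Measure ((ι → A) × Q)} [IsFiniteMeasure μ]
    (h : ∀ F : Finset ι, μ.map (window F) = ν.map (window F)) : μ = ν := by
  have hcylinder (F : Finset ι) {s : Set ((F → A) × Q)} (hs : MeasurableSet s) :
      μ (window F ⁻¹' s) = ν (window F ⁻¹' s) := by
    rw [← Measure.map_apply measurable_window hs, h F, Measure.map_apply measurable_window hs]
  have hspanning : IsCountablySpanning (measurableCylinders fun _ : ι => A) :=
    ⟨fun _ => univ, fun _ => univ_mem_measurableCylinders _, iUnion_const univ⟩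
  refine ext_of_generate_finite _
    (generateFrom_eq_prod generateFrom_measurableCylinders
      MeasurableSpace.generateFrom_measurableSet hspanning isCountablySpanning_measurableSet).symm
    (isPiSystem_measurableCylinders.prod MeasurableSpace.isPiSystem_measurableSet) ?_
    (hcylinder ∅ .univ)
  rintro _ ⟨s, hs, t, ht, rfl⟩
  obtain ⟨F, S, hS, rfl⟩ := (mem_measurableCylinders s).1 hs
  exact hcylinder F (hS.prod ht)

theorem measure_ext_of_eventually_map_window {μ ν : Measure ((ι → A) × Q)} [IsFiniteMeasure μ]
    (h : ∀ᶠ F : Finset ι in atTop, μ.map (window F) = ν.map (window F)) : μ = ν := by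
  classical
  refine measure_ext_of_map_window fun F => ?_
  obtain ⟨G, hG, hFG⟩ := (h.and (eventually_ge_atTop F)).exists
  obtain ⟨g, hg, hcomp⟩ : ∃ g : (G → A) × Q → (F → A) × Q, Measurable g ∧ window F = g ∘ window G :=
    ⟨Prod.map (Finset.restrict₂ (π := fun _ => A) hFG) id,
      (Finset.measurable_restrict₂ hFG).prodMap measurable_id, rfl⟩
  rw [hcomp, ← Measure.map_map hg measurable_window, hG, Measure.map_map hg measurable_window]

/-- `μ` is the uniform measure, for finite `A` and `Q`. It is specified by its values on cylinders,
which are written as fibres of `window F`. -/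
def IsUniform (μ : Measure ((ι → A) × Q)) : Prop :=
  ∀ (F : Finset ι) (c : (ι → A) × Q),
    μ (window F ⁻¹' {window F c}) = ((Nat.card Q : ℝ≥0∞) * (Nat.card A : ℝ≥0∞) ^ F.card)⁻¹

namespace IsUniform

variable {μ : Measure ((ι → A) × Q)}

theorem isOpenPosMeasure [TopologicalSpace A] [TopologicalSpace Q] (hμ : IsUniform μ) :
    μ.IsOpenPosMeasure where
  open_pos U hU := fun ⟨z, hz⟩ hzero => by
    obtain ⟨F, hF⟩ := exists_preimage_window_subset hU hz
    have hcylinder := hμ F z ▸ measure_mono_null hF hzero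
    exact ENNReal.mul_ne_top (ENNReal.natCast_ne_top _)
      (ENNReal.pow_ne_top (ENNReal.natCast_ne_top _)) (ENNReal.inv_eq_zero.1 hcylinder)

variable [Finite Q]

theorem isFiniteMeasure (hμ : IsUniform μ) : IsFiniteMeasure μ where
  measure_univ_lt_top := by
    rw [← preimage_univ (f := window ∅), ← biUnion_preimage_singleton]
    refine measure_biUnion_lt_top finite_univ fun p _ => ?_
    obtain hempty | ⟨c, rfl⟩ := (window ∅ ⁻¹' {p}).eq_empty_or_nonempty
    · simp [hempty]
    · have : Nonempty Q := ⟨c.2⟩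
      rw [hμ]
      simp

theorem measurePreserving_of_window [Finite A] [MeasurableSingletonClass A]
    [MeasurableSingletonClass Q]
    (hμ : IsUniform μ) {S : (ι → A) × Q → (ι → A) × Q} (hS : Measurable S) (hsurj : Surjective S)
    (hwindow : ∀ᶠ F in atTop, ∃ F' : Finset ι, F'.card = F.card ∧
      ∀ c z, window F (S c) = window F (S z) ↔ window F' c = window F' z) :
    MeasurePreserving S μ μ := by
  have : IsFiniteMeasure μ := hμ.isFiniteMeasure
  refine ⟨hS, measure_ext_of_eventually_map_window (hwindow.mono ?_)⟩
  rintro F ⟨F', hcard, hF'⟩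
  rw [Measure.map_map measurable_window hS]
  refine Measure.ext_of_singleton fun p => ?_
  rw [Measure.map_apply (measurable_window.comp hS) (measurableSet_singleton p),
    Measure.map_apply measurable_window (measurableSet_singleton p)]
  obtain hempty | ⟨y, rfl⟩ := (window F ⁻¹' {p}).eq_empty_or_nonempty
  · rw [preimage_comp, hempty, preimage_empty]
  · obtain ⟨z, rfl⟩ := hsurj y
    have hpreimage : window F ∘ S ⁻¹' {window F (S z)} = window F' ⁻¹' {window F' z} :=
      Set.ext fun c => hF' c z
    rw [hpreimage, hμ, hμ, hcard]

variable [Finite A] [Countable ι] [TopologicalSpace A] [DiscreteTopology A] [BorelSpace A]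
  [TopologicalSpace Q] [DiscreteTopology Q] [BorelSpace Q]

theorem measurePreserving_moveCells (hμ : IsUniform μ) (π : Equiv.Perm ι) :
    MeasurePreserving (moveCells π) μ μ :=
  hμ.measurePreserving_of_window (moveCells π).measurable (moveCells π).surjective <|
    .of_forall fun F =>
      ⟨F.map π.symm.toEmbedding, F.card_map _, fun _ _ => window_moveCells_eq_iff π⟩

theorem measurePreserving_permuteWindow [DecidableEq ι] (hμ : IsUniform μ) (E : Finset ι)
    (σ : Equiv.Perm ((E → A) × Q)) : MeasurePreserving (permuteWindow E σ) μ μ :=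
  hμ.measurePreserving_of_window (permuteWindow E σ).measurable (permuteWindow E σ).surjective <|
    (eventually_ge_atTop E).mono fun F hEF => ⟨F, rfl, fun _ _ => window_permuteWindow_eq_iff hEF σ⟩

end IsUniform
end Measure
end Window

section Machine

open MeasureTheory

variable {d n k : ℕ} {T : Cfg d n k → Cfg d n k}

theorem isUniform_of_cylinder {μ : Measure (Cfg d n k)}
    (hμ : ∀ (F : Finset (V d)) (p : V d → Fin n) (q : Fin k),
      μ {c : Cfg d n k | c.2 = q ∧ ∀ v ∈ F, c.1 v = p v} =
        1 / ((k : ENNReal) * (n : ENNReal) ^ F.card)) :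
    IsUniform μ := fun F z => by
  have hcylinder : window F ⁻¹' {window F z} = {c | c.2 = z.2 ∧ ∀ v ∈ F, c.1 v = z.1 v} :=
    Set.ext fun c => window_eq_window_iff.trans and_comm
  rw [hcylinder, hμ, Nat.card_fin, Nat.card_fin, one_div]

theorem IsTMfix.exists_isPiecewiseHomeomorph (hT : IsTMfix T) :
    ∃ φ : Cfg d n k → Cfg d n k ≃ₜ Cfg d n k, IsPiecewiseHomeomorph T φ ∧
      ∀ μ : Measure (Cfg d n k), IsUniform μ → ∀ c, MeasurePreserving (φ c) μ μ := by
  obtain ⟨F, F', f, hf, hT⟩ := hT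
  let rewritten (c : Cfg d n k) : Cfg d n k :=
    (fun v => if v ∈ F' then (f c.1 c.2).1 v else c.1 v, (f c.1 c.2).2.1)
  let φ (c : Cfg d n k) : Cfg d n k ≃ₜ Cfg d n k :=
    (permuteWindow (F ∪ F')
      (Equiv.swap (window (F ∪ F') c) (window (F ∪ F') (rewritten c)))).trans
      (moveCells (Equiv.subRight (f c.1 c.2).2.2).symm)
  refine ⟨φ, ⟨isLocallyConstant_of_window (F ∪ F') fun c z hcz => ?_, fun c => ?_⟩,
    fun μ hμ c => (hμ.measurePreserving_moveCells _).comp (hμ.measurePreserving_permuteWindow _ _)⟩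
  · obtain ⟨htape, hstate⟩ := window_eq_window_iff.1 hcz
    obtain ⟨hsymbol, hout⟩ := hf c.1 z.1 c.2 fun v hv => htape v (Finset.mem_union_left _ hv)
    rw [hstate] at hsymbol hout
    have hrewritten : window (F ∪ F') (rewritten c) = window (F ∪ F') (rewritten z) := by
      refine window_eq_window_iff.2 ⟨fun v hv => ?_, ?_⟩
      · by_cases hv' : v ∈ F'
        · simpa only [rewritten, hv', if_true, hstate] using hsymbol v hv'
        · simpa only [rewritten, hv', if_false] using htape v hv
      · simpa only [rewritten, hstate] using congrArg Prod.fst hout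
    simp only [φ, hcz, hrewritten, hstate, hout]
  · have hagree : ∀ v ∉ F ∪ F', c.1 v = (rewritten c).1 v := fun v hv =>
      (if_neg fun hv' => hv (Finset.mem_union_right _ hv')).symm
    change T c = moveCells _ (permuteWindow _ _ c)
    rw [permuteWindow_swap hagree]
    exact Prod.ext (funext (hT c.1 c.2).2) (hT c.1 c.2).1

end Machine

section TFAE

open MeasureTheory Set

theorem injective_surjective_reversible_general {X : Type*} [TopologicalSpace X]
    [CompactSpace X] [MeasurableSpace X] [BorelSpace X] {T : X → X} {φ : X → X ≃ₜ X}
    {μ : Measure X} [IsFiniteMeasure μ] [μ.IsOpenPosMeasure]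
    (h : IsPiecewiseHomeomorph T φ) (hμ : ∀ x, MeasurePreserving (φ x) μ μ) :
    List.TFAE [
      Injective T,
      Surjective T,
      Bijective T,
      ∀ A : Set X, MeasurableSet A → μ (T ⁻¹' A) = μ A,
      ∀ A : Set X, MeasurableSet A → μ (T '' A) = μ A] := by
  have hmeas : Measurable T := h.isLocalHomeomorph.continuous.measurable
  tfae_have 1 → 3 := fun hT =>
    h.bijective_of_ae_le_one hμ (.of_forall (preimageCount_le_one_iff_injective.2 hT))
  tfae_have 2 → 3 := fun hT =>
    h.bijective_of_one_ae_le hμ (.of_forall (one_le_preimageCount_iff_surjective.2 hT))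
  tfae_have 3 → 1 := Bijective.injective
  tfae_have 3 → 2 := Bijective.surjective
  tfae_have 3 → 4 := fun hT A hA =>
    (h.measurePreserving_of_bijective hμ hT).measure_preimage hA.nullMeasurableSet
  tfae_have 4 → 3 := fun hT => h.bijective_of_measurePreserving hμ
    ⟨hmeas, Measure.ext fun A hA => by rw [Measure.map_apply hmeas hA, hT A hA]⟩
  tfae_have 3 → 5 := fun hT A _ => by
    rw [← (h.measurePreserving_of_bijective hμ hT).measure_preimage_emb
      (h.isLocalHomeomorph.isOpenEmbedding_of_injective hT.injective).measurableEmbedding,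
      preimage_image_eq A hT.injective]
  tfae_have 5 → 3 := fun hT =>
    h.bijective_of_measure_range_eq hμ (by rw [← image_univ, hT univ .univ])
  tfae_finish

end TFAE

open MeasureTheory in
/-- For a moving-tape Turing machine `T` the following are equivalent:
injectivity, surjectivity, bijectivity (i.e. membership in `RTM_fix`),
preservation of the uniform measure `μ` in the backward sense, and in the
forward sense.  Here `μ` is the uniform measure, characterized on cylinders by
`μ([p]_F × {q}) = 1/(k·n^{|F|})`. -/
theorem injective_surjective_reversible (d n k : ℕ) (hd : 1 ≤ d) (hn : 1 ≤ n) (hk : 1 ≤ k)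
    (μ : Measure (Cfg d n k))
    (hμ : ∀ (F : Finset (V d)) (p : V d → Fin n) (q : Fin k),
      μ {c : Cfg d n k | c.2 = q ∧ ∀ v ∈ F, c.1 v = p v} =
        1 / ((k : ENNReal) * (n : ENNReal) ^ F.card))
    (T : Cfg d n k → Cfg d n k) (hT : IsTMfix T) :
    List.TFAE [
      Function.Injective T,
      Function.Surjective T,
      Function.Bijective T,
      ∀ A : Set (Cfg d n k), MeasurableSet A → μ (T ⁻¹' A) = μ A,
      ∀ A : Set (Cfg d n k), MeasurableSet A → μ (T '' A) = μ A] := by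
  have hμ_uniform : IsUniform μ := isUniform_of_cylinder hμ
  have hμ_finite : IsFiniteMeasure μ := hμ_uniform.isFiniteMeasure
  have hμ_openPos : μ.IsOpenPosMeasure := hμ_uniform.isOpenPosMeasure
  obtain ⟨φ, hφ, hφμ⟩ := hT.exists_isPiecewiseHomeomorph
  exact injective_surjective_reversible_general hφ (hφμ μ hμ_uniform)
end

section
/- Let d, k ≥ 1 and n ≥ 2. For all T₁, T₂ ∈ RTM_fix(ℤ^d,n,k) one has α(T₁ ∘ T₂) = α(T₁) + α(T₂); that is, the average movement α : RTM_fix(ℤ^d,n,k) → ℚ^d is a group homomorphism. -/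
open Function

/-- `s` is a (continuous) shift indicator for the moving-tape machine `T`:
`T(x,q)₁` agrees with `σ_{s(x,q)}(x)` outside a bounded region. -/
def ShiftIndicator {d n k : ℕ} (T : Cfg d n k → Cfg d n k) (s : Cfg d n k → V d) : Prop :=
  Continuous s ∧ ∃ a : ℕ, ∀ (c : Cfg d n k) (v : V d),
    a ≤ supnorm v → (T c).1 v = c.1 (v - s c)

/-!
The shift indicator is a cocycle, `s₁₂ = s₁ ∘ T₂ + s₂`: both sides describe how `T₁ ∘ T₂` translates
the tape far away from the origin, and two different translations can be told apart by changing a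
single distant cell. Integrating the cocycle gives additivity as soon as `μ` is `T₂`-invariant.
A moving-tape machine maps every cylinder on a large enough window onto a cylinder on a translated
window of the same size. When the machine is injective, the uniform measure therefore agrees with
its pullback on a generating π-system, which is the required invariance.
-/

section

open Filter Set Topology
open MeasureTheory hiding cylinder

variable {d n k : ℕ}

theorem tendsto_update_cofinite {ι : Type*} {X : ι → Type*} [DecidableEq ι]
    [∀ i, TopologicalSpace (X i)] (x z : ∀ i, X i) :
    Tendsto (fun i => update x i (z i)) cofinite (𝓝 x) := by
  refine tendsto_pi_nhds.2 fun j => tendsto_const_nhds.congr' ?_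
  filter_upwards [(finite_singleton j).compl_mem_cofinite] with i hi
  exact (update_of_ne (Ne.symm hi) _ _).symm

theorem measurePreserving_of_comap_eq_self {α : Type*} [MeasurableSpace α] {μ : Measure α}
    [IsFiniteMeasure μ] {T : α → α} (hT : MeasurableEmbedding T) (hμ : μ.comap T = μ) :
    MeasurePreserving T μ μ := by
  have range_full : ∀ᵐ a ∂μ, a ∈ range T := by
    refine (ae_iff_measure_eq hT.measurableSet_range.nullMeasurableSet).2 ?_
    calc μ (range T) = μ.comap T univ := by rw [hT.comap_apply, image_univ]
      _ = μ univ := by rw [hμ]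
  refine ⟨hT.measurable, ?_⟩
  calc μ.map T = (μ.comap T).map T := by rw [hμ]
    _ = μ.restrict (range T) := hT.map_comap μ
    _ = μ := Measure.restrict_eq_self_of_ae_mem range_full

theorem integrable_coord_of_continuous {X : Type*} [TopologicalSpace X] [CompactSpace X]
    [MeasurableSpace X] [OpensMeasurableSpace X] {μ : Measure X} [IsFiniteMeasure μ] {s : X → V d}
    (hs : Continuous s) (i : Fin d) : Integrable (fun x => (s x i : ℝ)) μ :=
  (continuous_of_discreteTopology (f := fun v : V d => (v i : ℝ))).comp hs
    |>.integrable_of_hasCompactSupport (HasCompactSupport.of_compactSpace _)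

theorem norm_eq_supnorm (v : V d) : ‖v‖ = supnorm v := by
  simp only [Pi.norm_def, ← NNReal.natCast_natAbs, ← Nat.cast_finsetSup, supnorm,
    NNReal.coe_natCast]

theorem comap_supnorm_atTop : comap (supnorm (d := d)) atTop = cofinite := by
  calc comap (supnorm (d := d)) atTop = comap (fun v : V d => ‖v‖) atTop := by
        simp only [norm_eq_supnorm, ← Nat.comap_cast_atTop (R := ℝ), comap_comap, comp_def]
    _ = cofinite := by
        rw [comap_norm_atTop, Metric.cobounded_eq_cocompact, cocompact_eq_cofinite]

theorem shiftIndicator_iff_eventually_cofinite {T : Cfg d n k → Cfg d n k} {s : Cfg d n k → V d} :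
    ShiftIndicator T s ↔
      Continuous s ∧ ∀ᶠ v in cofinite, ∀ c, (T c).1 v = c.1 (v - s c) := by
  simp only [ShiftIndicator, ← comap_supnorm_atTop, eventually_comap, eventually_atTop]
  refine and_congr_right fun _ => exists_congr fun a => ⟨?_, ?_⟩
  · rintro h _ hb v rfl c
    exact h c v hb
  · exact fun h c v hv => h _ hv v rfl c

theorem eq_of_eventually_translate_eq (hn : 2 ≤ n) {c : Cfg d n k} {U : Set (Cfg d n k)}
    (hU : U ∈ 𝓝 c) {u w : V d}
    (h : ∀ᶠ v in cofinite, ∀ c' ∈ U, c'.1 (v - u) = c'.1 (v - w)) : u = w := by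
  by_contra hne
  have : Nonempty (Fin d) := (Function.ne_iff.1 hne).nonempty
  have : Nontrivial (Fin n) := Fin.nontrivial_iff_two_le.2 hn
  choose z hz using fun v : V d => exists_ne (c.1 v)
  have perturbed_mem : ∀ᶠ v in cofinite, (update c.1 (v - u) (z (v - u)), c.2) ∈ U :=
    (((tendsto_update_cofinite c.1 z).comp sub_left_injective.tendsto_cofinite).prodMk_nhds
      tendsto_const_nhds).eventually_mem hU
  obtain ⟨v, hv, hmem⟩ := (h.and perturbed_mem).exists
  have hne' : v - w ≠ v - u := fun heq => hne (sub_right_injective heq).symm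
  have perturbed_eq := hv _ hmem
  simp only [update_self, update_of_ne hne'] at perturbed_eq
  exact hz _ (perturbed_eq.trans (hv c (mem_of_mem_nhds hU)).symm)

namespace ShiftIndicator

variable {T T₁ T₂ : Cfg d n k → Cfg d n k} {s s' s₁ s₂ : Cfg d n k → V d}

theorem unique (hn : 2 ≤ n) (hs : ShiftIndicator T s) (hs' : ShiftIndicator T s') : s = s' := by
  obtain ⟨hsc, hsT⟩ := shiftIndicator_iff_eventually_cofinite.1 hs
  obtain ⟨hsc', hsT'⟩ := shiftIndicator_iff_eventually_cofinite.1 hs'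
  funext c
  have locally_const : ∀ᶠ c' in 𝓝 c, s c' = s c ∧ s' c' = s' c :=
    (hsc.continuousAt.eventually_mem (isOpen_discrete {s c} |>.mem_nhds rfl)).and
      (hsc'.continuousAt.eventually_mem (isOpen_discrete {s' c} |>.mem_nhds rfl))
  refine eq_of_eventually_translate_eq hn locally_const ?_
  filter_upwards [hsT, hsT'] with v hv hv' c' hc'
  rw [← hc'.1, ← hc'.2, ← hv, ← hv']

theorem comp (hs₁ : ShiftIndicator T₁ s₁) (hs₂ : ShiftIndicator T₂ s₂) (hT₂ : Continuous T₂) :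
    ShiftIndicator (T₁ ∘ T₂) fun c => s₁ (T₂ c) + s₂ c := by
  rw [shiftIndicator_iff_eventually_cofinite] at hs₁ hs₂ ⊢
  obtain ⟨hsc₁, hsT₁⟩ := hs₁
  obtain ⟨hsc₂, hsT₂⟩ := hs₂
  refine ⟨(hsc₁.comp hT₂).add hsc₂, ?_⟩
  have range_finite : (range s₁).Finite := (isCompact_range hsc₁).finite_of_discrete
  have translated : ∀ᶠ v in cofinite, ∀ u ∈ range s₁, ∀ c,
      (T₂ c).1 (v - u) = c.1 (v - u - s₂ c) :=
    (eventually_all_finite range_finite).2 fun u _ =>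
      sub_left_injective.tendsto_cofinite.eventually hsT₂
  filter_upwards [hsT₁, translated] with v hv₁ hv₂ c
  rw [comp_apply, hv₁, hv₂ _ (mem_range_self _), sub_sub]

end ShiftIndicator

namespace Cfg

/-- The cylinder of the configurations that have the state of `c` and the symbols of `c` on `F`. -/
def cylinder (F : Finset (V d)) (c : Cfg d n k) : Set (Cfg d n k) :=
  {c' | c'.2 = c.2 ∧ ∀ v ∈ F, c'.1 v = c.1 v}

variable {F G : Finset (V d)} {c c' : Cfg d n k}

theorem mem_cylinder_self : c ∈ cylinder F c := ⟨rfl, fun _ _ => rfl⟩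

theorem cylinder_anti (hFG : F ⊆ G) : cylinder G c ⊆ cylinder F c :=
  fun _ h => ⟨h.1, fun v hv => h.2 v (hFG hv)⟩

theorem cylinder_eq_of_mem (h : c' ∈ cylinder F c) : cylinder F c' = cylinder F c := by
  ext c''
  simp only [cylinder, mem_ofPred_eq, h.1]
  exact and_congr_right fun _ => forall₂_congr fun v hv => by rw [h.2 v hv]

theorem cylinder_union (F G : Finset (V d)) (c : Cfg d n k) :
    cylinder (F ∪ G) c = cylinder F c ∩ cylinder G c := by
  ext c'
  simp only [cylinder, Finset.forall_mem_union, mem_inter_iff, mem_ofPred_eq]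
  tauto

theorem isOpen_cylinder (F : Finset (V d)) (c : Cfg d n k) : IsOpen (cylinder F c) := by
  have agree_isOpen (v : V d) : IsOpen {c' : Cfg d n k | c'.1 v = c.1 v} :=
    (isOpen_discrete {c.1 v}).preimage (f := fun c' : Cfg d n k => c'.1 v) (by fun_prop)
  have cylinder_eq : cylinder F c = {c' | c'.2 = c.2} ∩ ⋂ v ∈ F, {c' | c'.1 v = c.1 v} := by
    ext c'
    simp only [cylinder, mem_ofPred_eq, mem_inter_iff, mem_iInter]
  rw [cylinder_eq]
  exact ((isOpen_discrete {c.2}).preimage continuous_snd).inter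
    (isOpen_biInter_finset fun v _ => agree_isOpen v)

theorem cylinder_mem_nhds (F : Finset (V d)) (c : Cfg d n k) : cylinder F c ∈ 𝓝 c :=
  (isOpen_cylinder F c).mem_nhds mem_cylinder_self

theorem exists_cylinder_subset {U : Set (Cfg d n k)} (hU : U ∈ 𝓝 c) : ∃ F, cylinder F c ⊆ U := by
  obtain ⟨A, hA, B, hB, hAB⟩ := mem_nhds_prod_iff.1 hU
  rw [nhds_pi, Filter.mem_pi'] at hA
  obtain ⟨F, t, ht, htA⟩ := hA
  refine ⟨F, fun c' ⟨state_eq, tape_eq⟩ => hAB ⟨htA fun v hv => ?_, ?_⟩⟩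
  · exact tape_eq v hv ▸ mem_of_mem_nhds (ht v)
  · exact state_eq ▸ mem_of_mem_nhds hB

/-- The cylinders on windows containing `F`. -/
def cylindersOver (F : Finset (V d)) : Set (Set (Cfg d n k)) :=
  {A | ∃ G c, F ⊆ G ∧ A = cylinder G c}

theorem isPiSystem_cylindersOver (F : Finset (V d)) :
    IsPiSystem (cylindersOver F : Set (Set (Cfg d n k))) := by
  rintro _ ⟨G, a, hG, rfl⟩ _ ⟨H, b, -, rfl⟩ ⟨c, hca, hcb⟩
  refine ⟨G ∪ H, c, hG.trans Finset.subset_union_left, ?_⟩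
  rw [cylinder_union, cylinder_eq_of_mem hca, cylinder_eq_of_mem hcb]

theorem isTopologicalBasis_cylindersOver (F : Finset (V d)) :
    TopologicalSpace.IsTopologicalBasis (cylindersOver F : Set (Set (Cfg d n k))) := by
  refine TopologicalSpace.isTopologicalBasis_of_isOpen_of_nhds ?_ fun c U hc hU => ?_
  · rintro _ ⟨G, c, -, rfl⟩
    exact isOpen_cylinder G c
  · obtain ⟨G, hG⟩ := exists_cylinder_subset (hU.mem_nhds hc)
    exact ⟨_, ⟨F ∪ G, c, Finset.subset_union_left, rfl⟩, mem_cylinder_self,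
      (cylinder_anti Finset.subset_union_right).trans hG⟩

theorem measure_ext_of_cylinder {μ ν : Measure (Cfg d n k)} [IsFiniteMeasure μ]
    (F : Finset (V d)) (h : ∀ G, F ⊆ G → ∀ c, μ (cylinder G c) = ν (cylinder G c)) : μ = ν := by
  obtain ⟨t, -, ht⟩ := (isCompact_univ (X := Cfg d n k)).elim_nhds_subcover (cylinder F)
    fun c _ => cylinder_mem_nhds F c
  have generate : (inferInstance : MeasurableSpace (Cfg d n k)) =
      MeasurableSpace.generateFrom (cylindersOver F) :=
    BorelSpace.measurable_eq.trans (isTopologicalBasis_cylindersOver F).borel_eq_generateFrom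
  refine Measure.ext_of_generateFrom_of_cover_subset (T := cylinder F '' t) generate
    (isPiSystem_cylindersOver F) ?_ (t.countable_toSet.image _) ?_
    (fun _ _ => measure_ne_top _ _) ?_
  · rintro _ ⟨c, -, rfl⟩
    exact ⟨F, c, subset_rfl, rfl⟩
  · rw [sUnion_image]
    exact univ_subset_iff.1 ht
  · rintro _ ⟨G, c, hG, rfl⟩
    exact h G hG c

end Cfg

open Cfg

theorem TapeDefinedBy.apply_of_mem_cylinder {F F' : Finset (V d)}
    {f : (V d → Fin n) → Fin k → (V d → Fin n) × Fin k × V d} {T : Cfg d n k → Cfg d n k}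
    (hT : TapeDefinedBy F F' f T) {c c' : Cfg d n k} (hc' : c' ∈ cylinder F c) :
    (T c').2 = (T c).2 ∧ ∀ v, (T c').1 (v + (f c.1 c.2).2.2) =
      if v ∈ F' then (T c).1 (v + (f c.1 c.2).2.2) else c'.1 v := by
  obtain ⟨f_local, T_eq⟩ := hT
  obtain ⟨write_eq, move_eq⟩ := f_local c'.1 c.1 c.2 hc'.2
  obtain ⟨x, q⟩ := c
  obtain ⟨x', q'⟩ := c'
  obtain rfl : q' = q := hc'.1
  refine ⟨by rw [(T_eq _ _).1, (T_eq _ _).1, move_eq], fun v => ?_⟩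
  simp only [(T_eq _ _).2, move_eq, add_sub_cancel_right]
  split_ifs with hv
  · exact write_eq v hv
  · rfl

theorem TapeDefinedBy.image_cylinder {F F' G : Finset (V d)}
    {f : (V d → Fin n) → Fin k → (V d → Fin n) × Fin k × V d} {T : Cfg d n k → Cfg d n k}
    (hT : TapeDefinedBy F F' f T) (hG : F ∪ F' ⊆ G) (c : Cfg d n k) :
    T '' cylinder G c = cylinder (G.map (addRightEmbedding (f c.1 c.2).2.2)) (T c) := by
  obtain ⟨hFG, hF'G⟩ := Finset.union_subset_iff.1 hG
  have T_apply := fun c' (hc' : c' ∈ cylinder G c) =>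
    hT.apply_of_mem_cylinder (cylinder_anti hFG hc')
  set u := (f c.1 c.2).2.2
  have T_apply_center := (T_apply c mem_cylinder_self).2
  ext b
  simp only [mem_image, cylinder, mem_ofPred_eq, Finset.forall_mem_map, addRightEmbedding_apply]
  constructor
  · rintro ⟨c', hc', rfl⟩
    obtain ⟨state_eq, tape_eq⟩ := T_apply c' hc'
    refine ⟨state_eq, fun v hv => ?_⟩
    rw [tape_eq, hc'.2 v hv, ← T_apply_center]
  · rintro ⟨state_eq, tape_eq⟩
    let c' : Cfg d n k := (fun v => if v ∈ G then c.1 v else b.1 (v + u), c.2)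
    have hc' : c' ∈ cylinder G c := ⟨rfl, fun v hv => if_pos hv⟩
    obtain ⟨state_eq', tape_eq'⟩ := T_apply c' hc'
    refine ⟨c', hc', Prod.ext (funext fun w => ?_) (state_eq'.trans state_eq.symm)⟩
    obtain ⟨v, rfl⟩ : ∃ v, v + u = w := ⟨w - u, sub_add_cancel w u⟩
    by_cases hv : v ∈ G
    · rw [tape_eq', hc'.2 v hv, ← T_apply_center, tape_eq v hv]
    · rw [tape_eq', if_neg fun hv' => hv (hF'G hv')]
      exact if_neg hv

/-- A uniform measure on the configuration space: the product of the uniform Bernoulli measure on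
tapes and the uniform measure on states, described by its values on cylinders. -/
def IsUniformMeasure (μ : Measure (Cfg d n k)) : Prop :=
  ∀ F c, μ (cylinder F c) = 1 / ((k : ENNReal) * (n : ENNReal) ^ F.card)

theorem IsUniformMeasure.isFiniteMeasure {μ : Measure (Cfg d n k)} (hμ : IsUniformMeasure μ) :
    IsFiniteMeasure μ := by
  have : IsLocallyFiniteMeasure μ := ⟨fun c => ⟨_, cylinder_mem_nhds ∅ c, by
    have : k ≠ 0 := c.2.pos.ne'
    simp [hμ ∅ c, this, pos_iff_ne_zero]⟩⟩
  infer_instance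

namespace IsTMfix

variable {T : Cfg d n k → Cfg d n k}

theorem exists_forall_image_cylinder (hT : IsTMfix T) :
    ∃ F : Finset (V d), ∀ c, ∃ u, ∀ G, F ⊆ G →
      T '' cylinder G c = cylinder (G.map (addRightEmbedding u)) (T c) := by
  obtain ⟨F, F', f, hf⟩ := hT
  exact ⟨F ∪ F', fun c => ⟨_, fun _ hG => hf.image_cylinder hG c⟩⟩

protected theorem continuous (hT : IsTMfix T) : Continuous T := by
  obtain ⟨F, hF⟩ := hT.exists_forall_image_cylinder
  refine continuous_iff_continuousAt.2 fun c U hU => ?_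
  obtain ⟨u, hu⟩ := hF c
  obtain ⟨H, hH⟩ := exists_cylinder_subset hU
  let G := F ∪ H.map (addRightEmbedding (-u))
  have H_subset : H ⊆ G.map (addRightEmbedding u) := fun v hv =>
    Finset.mem_map.2 ⟨v + -u, Finset.mem_union_right _ (Finset.mem_map_of_mem _ hv), by simp⟩
  refine mem_map.2 <| mem_of_superset (cylinder_mem_nhds G c) fun c' hc' =>
    hH (cylinder_anti H_subset ?_)
  rw [← hu G Finset.subset_union_left]
  exact mem_image_of_mem T hc'

theorem measurePreserving (hT : IsTMfix T) (hinj : Injective T) {μ : Measure (Cfg d n k)}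
    (hμ : IsUniformMeasure μ) : MeasurePreserving T μ μ := by
  have := hμ.isFiniteMeasure
  have T_embedding : MeasurableEmbedding T :=
    (hT.continuous.isClosedEmbedding hinj).measurableEmbedding
  obtain ⟨F, hF⟩ := hT.exists_forall_image_cylinder
  refine measurePreserving_of_comap_eq_self T_embedding
    (measure_ext_of_cylinder F fun G hG c => ?_).symm
  obtain ⟨u, hu⟩ := hF c
  rw [T_embedding.comap_apply, hu G hG, hμ, hμ, Finset.card_map]

end IsTMfix

theorem averageMovement_additive_general (hn : 2 ≤ n) {μ : Measure (Cfg d n k)} [IsFiniteMeasure μ]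
    {T₁ T₂ : Cfg d n k → Cfg d n k} (hT₂ : Continuous T₂) (hμ : MeasurePreserving T₂ μ μ)
    {s₁ s₂ s₁₂ : Cfg d n k → V d} (hs₁ : ShiftIndicator T₁ s₁) (hs₂ : ShiftIndicator T₂ s₂)
    (hs₁₂ : ShiftIndicator (T₁ ∘ T₂) s₁₂) (i : Fin d) :
    ∫ c, (s₁₂ c i : ℝ) ∂μ = ∫ c, (s₁ c i : ℝ) ∂μ + ∫ c, (s₂ c i : ℝ) ∂μ := by
  have integrable₁ : Integrable (fun c => (s₁ c i : ℝ)) μ := integrable_coord_of_continuous hs₁.1 i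
  have invariant : ∫ c, (s₁ (T₂ c) i : ℝ) ∂μ = ∫ c, (s₁ c i : ℝ) ∂μ := by
    have integral_eq := integral_map hμ.aemeasurable (hμ.map_eq.symm ▸ integrable₁.1)
    rwa [hμ.map_eq, eq_comm] at integral_eq
  obtain rfl : s₁₂ = fun c => s₁ (T₂ c) + s₂ c := hs₁₂.unique hn (hs₁.comp hs₂ hT₂)
  calc ∫ c, ((s₁ (T₂ c) + s₂ c) i : ℝ) ∂μ
      = ∫ c, ((s₁ (T₂ c) i : ℝ) + (s₂ c i : ℝ)) ∂μ := by simp only [Pi.add_apply, Int.cast_add]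
    _ = ∫ c, (s₁ (T₂ c) i : ℝ) ∂μ + ∫ c, (s₂ c i : ℝ) ∂μ :=
        integral_add (hμ.integrable_comp_of_integrable integrable₁)
          (integrable_coord_of_continuous hs₂.1 i)
    _ = ∫ c, (s₁ c i : ℝ) ∂μ + ∫ c, (s₂ c i : ℝ) ∂μ := by rw [invariant]

end

open MeasureTheory in
/-- For reversible moving-tape machines `T₁, T₂` with shift indicators `s₁, s₂`, and
a shift indicator `s₁₂` of `T₁ ∘ T₂`, the average movement is additive:
`α(T₁ ∘ T₂) = α(T₁) + α(T₂)` (componentwise, `α(T) = ∫ s_T dμ` with `μ` the uniform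
measure); that is, `α : RTM_fix(ℤ^d,n,k) → ℚ^d` is a group homomorphism. -/
theorem averageMovement_additive (d n k : ℕ) (hd : 1 ≤ d) (hn : 2 ≤ n) (hk : 1 ≤ k)
    (μ : Measure (Cfg d n k))
    (hμ : ∀ (F : Finset (V d)) (p : V d → Fin n) (q : Fin k),
      μ {c : Cfg d n k | c.2 = q ∧ ∀ v ∈ F, c.1 v = p v} =
        1 / ((k : ENNReal) * (n : ENNReal) ^ F.card))
    (T₁ T₂ : Cfg d n k → Cfg d n k)
    (h₁ : IsTMfix T₁) (h₂ : IsTMfix T₂)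
    (hb₁ : Function.Bijective T₁) (hb₂ : Function.Bijective T₂)
    (s₁ s₂ s₁₂ : Cfg d n k → V d)
    (hs₁ : ShiftIndicator T₁ s₁) (hs₂ : ShiftIndicator T₂ s₂)
    (hs₁₂ : ShiftIndicator (T₁ ∘ T₂) s₁₂) :
    ∀ i : Fin d,
      ∫ c, ((s₁₂ c i : ℤ) : ℝ) ∂μ =
        (∫ c, ((s₁ c i : ℤ) : ℝ) ∂μ) + ∫ c, ((s₂ c i : ℤ) : ℝ) ∂μ := by
  have hμ' : IsUniformMeasure μ := fun F c => hμ F c.1 c.2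
  have := hμ'.isFiniteMeasure
  exact averageMovement_additive_general hn h₂.continuous (h₂.measurePreserving hb₂.injective hμ')
    hs₁ hs₂ hs₁₂
end

section
/- Let n, k ≥ 1. A classical Turing machine T ∈ TM(ℤ,n,k) is reversible if and only if T = T₁ ∘ T₀ for some state-symbol permutation T₀ and some state-dependent shift T₁. -/
open Function

/-- A head configuration on `ℤ` is valid if it carries at most one head. -/
def headOk1 {k : ℕ} (y : ℤ → Option (Fin k)) : Prop :=
  ∀ u v : ℤ, (y u).isSome → (y v).isSome → u = v

/-- The space `X_{n,k}` in dimension one: a tape in `Σ^ℤ` together with at most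
one head carrying a state in `Q = Fin k`. -/
abbrev X1 (n k : ℕ) : Type :=
  { c : (ℤ → Fin n) × (ℤ → Option (Fin k)) // headOk1 c.2 }

/-- `DefinedBy1 F F' f T` : `T` is the moving-head Turing machine on `ℤ` defined by
the local rule `f`, reading the tape on the window `F`, writing on the window `F'`,
changing the state and moving the head. -/
def DefinedBy1 {n k : ℕ} (F F' : Finset ℤ)
    (f : (ℤ → Fin n) → Fin k → (ℤ → Fin n) × Fin k × ℤ)
    (T : X1 n k → X1 n k) : Prop :=
  -- `f` only depends on the restriction of the tape to `F`, and only the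
  -- restriction of its tape output to `F'` matters:
  (∀ x x' q, (∀ v ∈ F, x v = x' v) →
      (∀ v ∈ F', (f x q).1 v = (f x' q).1 v) ∧ (f x q).2 = (f x' q).2) ∧
  -- a configuration with no head is fixed:
  (∀ c : X1 n k, (∀ v, c.val.2 v = none) → T c = c) ∧
  -- if the head is at `v` in state `q`, apply the local rule there:
  (∀ (c : X1 n k) (v : ℤ) (q : Fin k), c.val.2 v = some q →
    (∀ t, (T c).val.1 t =
      if t - v ∈ F' then (f (fun u => c.val.1 (u + v)) q).1 (t - v) else c.val.1 t) ∧
    (∀ t, (T c).val.2 t =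
      if t = v + (f (fun u => c.val.1 (u + v)) q).2.2
      then some (f (fun u => c.val.1 (u + v)) q).2.1 else none))

/-- A moving-head `(1,n,k)`-Turing machine. -/
def IsTM1 {n k : ℕ} (T : X1 n k → X1 n k) : Prop :=
  ∃ F F' f, DefinedBy1 F F' f T

/-- A reversible Turing machine: a Turing machine admitting a Turing machine
inverse. -/
def IsRTM1 {n k : ℕ} (T : X1 n k → X1 n k) : Prop :=
  IsTM1 T ∧ ∃ S : X1 n k → X1 n k, IsTM1 S ∧ S ∘ T = id ∧ T ∘ S = id

/-- A classical Turing machine: one definable with in- and out-window `{0}` and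
movements in `{-1,0,1}`. -/
def IsClassical {n k : ℕ} (T : X1 n k → X1 n k) : Prop :=
  ∃ f, DefinedBy1 ({0} : Finset ℤ) ({0} : Finset ℤ) f T ∧
    ∀ x q, (f x q).2.2 ∈ ({-1, 0, 1} : Set ℤ)

/-- A state-symbol permutation: the classical machine induced by a permutation `g`
of `Σ × Q`; it replaces the pair (symbol under the head, state) by its image under
`g` and does not move the head. -/
def IsStateSymbolPerm {n k : ℕ} (T : X1 n k → X1 n k) : Prop :=
  ∃ g : Equiv.Perm (Fin n × Fin k),
    DefinedBy1 ({0} : Finset ℤ) ({0} : Finset ℤ)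
      (fun x q => (fun _ => (g (x 0, q)).1, (g (x 0, q)).2, 0)) T

/-- A state-dependent shift: a classical machine that never modifies the tape or
the state and moves the head by a vector in `{-1,0,1}` depending only on the
current state. -/
def IsStateDependentShift {n k : ℕ} (T : X1 n k → X1 n k) : Prop :=
  ∃ D : Fin k → ℤ, (∀ q, D q ∈ ({-1, 0, 1} : Set ℤ)) ∧
    DefinedBy1 (∅ : Finset ℤ) (∅ : Finset ℤ) (fun x q => (x, q, D q)) T

/-!
A classical machine acts by `cellMachine φ μ`, where `φ` rewrites the pair
(symbol under the head, state) and the head then moves by `μ` of the old pair. A target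
configuration with tape `y` and head at `0` in state `s` has a preimage for each pair `p` such that
`φ p = (y (-μ p), s)`. When `μ p ≠ μ p'`, the cells `-μ p` and `-μ p'` are distinct, so a tape `y`
can serve both `p` and `p'`. Injectivity therefore forces the movement to be a function of the new
state alone, and it forces `φ` to be injective, hence a permutation of the finite set `Σ × Q`.
Conversely, undoing the shift and then the permutation inverts the machine; the inverse is again a
Turing machine, although in general with a window larger than one cell.
-/

section

variable {n k : ℕ}

namespace X1

/-- The configuration with tape `x` whose head is at `v` in state `q`. -/
def withHead (x : ℤ → Fin n) (v : ℤ) (q : Fin k) : X1 n k :=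
  ⟨(x, fun t => if t = v then some q else none), by
    intro a b ha hb
    simp only [Option.isSome_ite] at ha hb
    rw [ha, hb]⟩

/-- A configuration carrying no head, i.e. one that every Turing machine fixes. -/
def Headless (c : X1 n k) : Prop :=
  ∀ v, c.val.2 v = none

theorem withHead_inj {x x' : ℤ → Fin n} {v v' : ℤ} {q q' : Fin k} :
    withHead x v q = withHead x' v' q' ↔ x = x' ∧ v = v' ∧ q = q' := by
  refine ⟨fun h => ?_, by rintro ⟨rfl, rfl, rfl⟩; rfl⟩
  have hx : x = x' := congrArg (fun c => c.val.1) h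
  have hhead : some q = if v = v' then some q' else none := by
    simpa [withHead] using congrFun (congrArg (fun c => c.val.2) h) v
  split_ifs at hhead with hv
  exact ⟨hx, hv, Option.some_inj.mp hhead⟩

theorem injective_withHead :
    Injective fun p : (ℤ → Fin n) × ℤ × Fin k => withHead p.1 p.2.1 p.2.2 := by
  rintro ⟨x, v, q⟩ ⟨x', v', q'⟩ h
  obtain ⟨rfl, rfl, rfl⟩ := withHead_inj.mp h
  rfl

theorem withHead_head (x : ℤ → Fin n) (v : ℤ) (q : Fin k) :
    (withHead x v q).val.2 v = some q :=
  if_pos rfl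

theorem not_headless_withHead (x : ℤ → Fin n) (v : ℤ) (q : Fin k) :
    ¬ Headless (withHead x v q) := fun h => by
  simpa [withHead_head] using h v

theorem eq_withHead {c : X1 n k} {v : ℤ} {q : Fin k} (h : c.val.2 v = some q) :
    c = withHead c.val.1 v q := by
  refine Subtype.ext (Prod.ext rfl (funext fun t => ?_))
  by_cases ht : t = v
  · simp [withHead, ht, h]
  · have hnone : c.val.2 t = none := by
      by_contra hsome
      exact ht (c.property t v (Option.isSome_iff_ne_none.mpr hsome) (by simp [h]))
    simp [withHead, ht, hnone]

theorem headless_or_exists_eq_withHead (c : X1 n k) :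
    Headless c ∨ ∃ x v q, c = withHead x v q := by
  refine or_iff_not_imp_left.mpr fun h => ?_
  obtain ⟨v, hv⟩ := not_forall.mp h
  obtain ⟨q, hq⟩ := Option.ne_none_iff_exists'.mp hv
  exact ⟨_, v, q, eq_withHead hq⟩

end X1

open X1

theorem definedBy1_iff {F F' : Finset ℤ} {f : (ℤ → Fin n) → Fin k → (ℤ → Fin n) × Fin k × ℤ}
    {T : X1 n k → X1 n k} :
    DefinedBy1 F F' f T ↔
      (∀ x x' q, (∀ v ∈ F, x v = x' v) →
        (∀ v ∈ F', (f x q).1 v = (f x' q).1 v) ∧ (f x q).2 = (f x' q).2) ∧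
      (∀ c, Headless c → T c = c) ∧
      ∀ x v q, T (withHead x v q) =
        withHead (fun t => if t - v ∈ F' then (f (fun u => x (u + v)) q).1 (t - v) else x t)
          (v + (f (fun u => x (u + v)) q).2.2) (f (fun u => x (u + v)) q).2.1 := by
  refine and_congr_right' (and_congr_right' ⟨fun h x v q => ?_, fun h c v q hc => ?_⟩)
  · obtain ⟨htape, hhead⟩ := h (withHead x v q) v q (withHead_head x v q)
    exact Subtype.ext (Prod.ext (funext htape) (funext hhead))
  · have hTc := h c.val.1 v q
    rw [← eq_withHead hc] at hTc
    rw [hTc]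
    exact ⟨fun _ => rfl, fun _ => rfl⟩

/-- The machine that replaces the pair `p` (symbol under the head, state) by `φ p` and then moves
the head by `μ p`. The movement is read off the pair before rewriting and is not bounded. -/
noncomputable def cellMachine (φ : Fin n × Fin k → Fin n × Fin k) (μ : Fin n × Fin k → ℤ) :
    X1 n k → X1 n k :=
  extend (fun p : (ℤ → Fin n) × ℤ × Fin k => withHead p.1 p.2.1 p.2.2)
    (fun ⟨x, v, q⟩ => withHead (update x v (φ (x v, q)).1) (v + μ (x v, q)) (φ (x v, q)).2) id

/-- The machine that moves the head by `D q` when its state is `q` and changes nothing else. -/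
noncomputable abbrev stateShift (D : Fin k → ℤ) : X1 n k → X1 n k :=
  cellMachine id (D ∘ Prod.snd)

theorem cellMachine_withHead (φ : Fin n × Fin k → Fin n × Fin k) (μ : Fin n × Fin k → ℤ)
    (x : ℤ → Fin n) (v : ℤ) (q : Fin k) :
    cellMachine φ μ (withHead x v q) =
      withHead (update x v (φ (x v, q)).1) (v + μ (x v, q)) (φ (x v, q)).2 :=
  injective_withHead.extend_apply _ _ (x, v, q)

theorem stateShift_withHead (D : Fin k → ℤ) (x : ℤ → Fin n) (v : ℤ) (q : Fin k) :
    stateShift D (withHead x v q) = withHead x (v + D q) q := by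
  simp [cellMachine_withHead]

theorem cellMachine_of_headless (φ : Fin n × Fin k → Fin n × Fin k) (μ : Fin n × Fin k → ℤ)
    {c : X1 n k} (hc : Headless c) : cellMachine φ μ c = c := by
  refine extend_apply' _ _ _ ?_
  rintro ⟨⟨x, v, q⟩, rfl⟩
  exact not_headless_withHead x v q hc

theorem eq_cellMachine {φ : Fin n × Fin k → Fin n × Fin k} {μ : Fin n × Fin k → ℤ}
    {T : X1 n k → X1 n k} (hfix : ∀ c, Headless c → T c = c)
    (hstep : ∀ x v q, T (withHead x v q) =
      withHead (update x v (φ (x v, q)).1) (v + μ (x v, q)) (φ (x v, q)).2) :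
    T = cellMachine φ μ := by
  funext c
  rcases headless_or_exists_eq_withHead c with hc | ⟨x, v, q, rfl⟩
  · rw [hfix c hc, cellMachine_of_headless φ μ hc]
  · rw [hstep, cellMachine_withHead]

theorem cellMachine_id_zero : cellMachine (n := n) (k := k) id 0 = id :=
  (eq_cellMachine (fun _ _ => rfl) fun x v q => by simp).symm

theorem cellMachine_comp_cellMachine_zero (φ ψ : Fin n × Fin k → Fin n × Fin k)
    (μ : Fin n × Fin k → ℤ) :
    cellMachine φ μ ∘ cellMachine ψ 0 = cellMachine (φ ∘ ψ) (μ ∘ ψ) :=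
  eq_cellMachine (fun c hc => by simp [cellMachine_of_headless _ _ hc])
    fun x v q => by simp [cellMachine_withHead]

theorem stateShift_comp_stateShift (D E : Fin k → ℤ) :
    (stateShift D ∘ stateShift E : X1 n k → X1 n k) = stateShift (E + D) :=
  eq_cellMachine (fun c hc => by simp [cellMachine_of_headless _ _ hc])
    fun x v q => by simp [stateShift_withHead, add_assoc]

theorem cellMachine_zero_comp_eq_id {φ ψ : Fin n × Fin k → Fin n × Fin k}
    (h : LeftInverse φ ψ) : cellMachine φ 0 ∘ cellMachine ψ 0 = id := by
  rw [cellMachine_comp_cellMachine_zero, h.comp_eq_id]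
  exact cellMachine_id_zero

theorem stateShift_comp_eq_id {D E : Fin k → ℤ} (h : E + D = 0) :
    (stateShift D ∘ stateShift E : X1 n k → X1 n k) = id := by
  rw [stateShift_comp_stateShift, h]
  exact cellMachine_id_zero

theorem definedBy1_cellMachine (φ : Fin n × Fin k → Fin n × Fin k) (μ : Fin n × Fin k → ℤ) :
    DefinedBy1 {0} {0}
      (fun x q => (fun _ => (φ (x 0, q)).1, (φ (x 0, q)).2, μ (x 0, q))) (cellMachine φ μ) := by
  refine definedBy1_iff.mpr ⟨fun x x' q hx => ?_, fun c => cellMachine_of_headless φ μ,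
    fun x v q => ?_⟩
  · simp [hx 0 (Finset.mem_singleton_self 0)]
  · simp only [cellMachine_withHead, withHead_inj, zero_add, and_true]
    funext t
    simp [update_apply, sub_eq_zero]

theorem definedBy1_stateShift (D : Fin k → ℤ) :
    DefinedBy1 (n := n) ∅ ∅ (fun x q => (x, q, D q)) (stateShift D) :=
  definedBy1_iff.mpr ⟨by simp, fun c => cellMachine_of_headless _ _, by simp [stateShift_withHead]⟩

theorem isTM1_cellMachine_comp_stateShift (φ : Fin n × Fin k → Fin n × Fin k)
    (μ : Fin n × Fin k → ℤ) (D : Fin k → ℤ) : IsTM1 (cellMachine φ μ ∘ stateShift D) := by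
  have hmem (q : Fin k) : D q ∈ Finset.univ.image D := Finset.mem_image_of_mem D (Finset.mem_univ q)
  refine ⟨Finset.univ.image D, Finset.univ.image D,
    fun x q => (update x (D q) (φ (x (D q), q)).1, (φ (x (D q), q)).2, D q + μ (x (D q), q)),
    definedBy1_iff.mpr ⟨fun x x' q hx => ?_, fun c hc => ?_, fun x v q => ?_⟩⟩
  · rw [hx _ (hmem q)]
    exact ⟨fun v hv => by simp only [update_apply, hx v hv], rfl⟩
  · simp [cellMachine_of_headless _ _ hc]
  · rw [comp_apply, stateShift_withHead, cellMachine_withHead, withHead_inj]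
    simp only [add_comm (D q) v, and_true]
    refine ⟨funext fun t => ?_, add_assoc _ _ _⟩
    by_cases ht : t = v + D q
    · simp [ht, hmem]
    · have ht' : t - v ≠ D q := by omega
      simp [ht, ht']

theorem DefinedBy1.eq_cellMachine {f : (ℤ → Fin n) → Fin k → (ℤ → Fin n) × Fin k × ℤ}
    {T : X1 n k → X1 n k} (h : DefinedBy1 {0} {0} f T) :
    T = cellMachine (fun p => ((f (fun _ => p.1) p.2).1 0, (f (fun _ => p.1) p.2).2.1))
      (fun p => (f (fun _ => p.1) p.2).2.2) := by
  obtain ⟨hlocal, hfix, hstep⟩ := definedBy1_iff.mp h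
  refine _root_.eq_cellMachine hfix fun x v q => ?_
  obtain ⟨hsymbol, hstate⟩ := hlocal (fun u => x (u + v)) (fun _ => x v) q (by simp)
  rw [hstep, hstate, withHead_inj]
  refine ⟨funext fun t => ?_, rfl, rfl⟩
  by_cases ht : t = v
  · simpa [ht] using hsymbol 0 (Finset.mem_singleton_self 0)
  · simp [ht, sub_eq_zero]

theorem IsClassical.exists_eq_cellMachine {T : X1 n k → X1 n k} (h : IsClassical T) :
    ∃ φ μ, (∀ p, μ p ∈ ({-1, 0, 1} : Set ℤ)) ∧ T = cellMachine φ μ := by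
  obtain ⟨f, hf, hmove⟩ := h
  exact ⟨_, _, fun p => hmove _ p.2, hf.eq_cellMachine⟩

theorem isStateSymbolPerm_iff {T : X1 n k → X1 n k} :
    IsStateSymbolPerm T ↔ ∃ g : Equiv.Perm (Fin n × Fin k), T = cellMachine g 0 := by
  refine exists_congr fun g => ⟨fun h => h.eq_cellMachine, ?_⟩
  rintro rfl
  exact definedBy1_cellMachine g 0

theorem isStateDependentShift_iff {T : X1 n k → X1 n k} :
    IsStateDependentShift T ↔
      ∃ D : Fin k → ℤ, (∀ q, D q ∈ ({-1, 0, 1} : Set ℤ)) ∧ T = stateShift D := by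
  refine exists_congr fun D => and_congr_right' ⟨fun h => ?_, ?_⟩
  · obtain ⟨-, hfix, hstep⟩ := definedBy1_iff.mp h
    exact eq_cellMachine hfix fun x v q => by simp [hstep]
  · rintro rfl
    exact definedBy1_stateShift D

section Injective

variable {φ : Fin n × Fin k → Fin n × Fin k} {μ : Fin n × Fin k → ℤ}

theorem cellMachine_withHead_update {y : ℤ → Fin n} {p : Fin n × Fin k} (hy : y (-μ p) = (φ p).1) :
    cellMachine φ μ (withHead (update y (-μ p) p.1) (-μ p) p.2) = withHead y 0 (φ p).2 := by
  simp [cellMachine_withHead, ← hy]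

theorem eq_of_injective_cellMachine (hinj : Injective (cellMachine φ μ)) {y : ℤ → Fin n}
    {p p' : Fin n × Fin k} (hstate : (φ p).2 = (φ p').2) (hy : y (-μ p) = (φ p).1)
    (hy' : y (-μ p') = (φ p').1) : p = p' := by
  have hpre := hinj <| (cellMachine_withHead_update hy).trans <|
    (congrArg (withHead y 0) hstate).trans (cellMachine_withHead_update hy').symm
  obtain ⟨htape, hpos, hq⟩ := withHead_inj.mp hpre
  refine Prod.ext ?_ hq
  simpa [hpos] using congrFun htape (-μ p)

theorem injective_of_injective_cellMachine (hinj : Injective (cellMachine φ μ)) : Injective φ :=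
  fun p _ h => eq_of_injective_cellMachine hinj (y := fun _ => (φ p).1)
    (congrArg Prod.snd h) rfl (congrArg Prod.fst h)

theorem factorsThrough_of_injective_cellMachine (hinj : Injective (cellMachine φ μ)) :
    μ.FactorsThrough (Prod.snd ∘ φ) := by
  intro p p' hstate
  by_contra hne
  let y (v : ℤ) : Fin n := if v = -μ p then (φ p).1 else (φ p').1
  have hy' : y (-μ p') = (φ p').1 := if_neg fun h => hne (neg_injective h).symm
  exact hne (congrArg μ (eq_of_injective_cellMachine hinj hstate (y := y) (if_pos rfl) hy'))

theorem exists_comp_snd_eq_of_injective_cellMachine (hinj : Injective (cellMachine φ μ))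
    {M : Set ℤ} (hzero : 0 ∈ M) (hμ : ∀ p, μ p ∈ M) :
    ∃ D : Fin k → ℤ, (∀ q, D q ∈ M) ∧ D ∘ Prod.snd ∘ φ = μ := by
  refine ⟨extend (Prod.snd ∘ φ) μ 0, fun q => ?_,
    funext <| (factorsThrough_of_injective_cellMachine hinj).extend_apply 0⟩
  by_cases hq : ∃ p, (Prod.snd ∘ φ) p = q
  · obtain ⟨p, rfl⟩ := hq
    rw [(factorsThrough_of_injective_cellMachine hinj).extend_apply]
    exact hμ p
  · rwa [extend_apply' _ _ _ hq]

theorem exists_eq_stateShift_comp_of_injective_cellMachine (hinj : Injective (cellMachine φ μ))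
    {M : Set ℤ} (hzero : 0 ∈ M) (hμ : ∀ p, μ p ∈ M) :
    ∃ (g : Equiv.Perm (Fin n × Fin k)) (D : Fin k → ℤ),
      (∀ q, D q ∈ M) ∧ cellMachine φ μ = stateShift D ∘ cellMachine g 0 := by
  obtain ⟨D, hD, rfl⟩ := exists_comp_snd_eq_of_injective_cellMachine hinj hzero hμ
  have hφ : Bijective φ :=
    Finite.injective_iff_bijective.mp (injective_of_injective_cellMachine hinj)
  exact ⟨Equiv.ofBijective φ hφ, D, hD,
    (cellMachine_comp_cellMachine_zero id φ (D ∘ Prod.snd)).symm⟩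

end Injective

theorem isRTM1_stateShift_comp_cellMachine (g : Equiv.Perm (Fin n × Fin k)) (D : Fin k → ℤ) :
    IsRTM1 (stateShift D ∘ cellMachine g 0) := by
  refine ⟨?_, cellMachine g.symm 0 ∘ stateShift (-D),
    isTM1_cellMachine_comp_stateShift _ _ _, ?_, ?_⟩
  · rw [cellMachine_comp_cellMachine_zero]
    exact ⟨_, _, _, definedBy1_cellMachine _ _⟩
  · rw [comp_assoc, ← comp_assoc (stateShift (-D)),
      stateShift_comp_eq_id (add_neg_cancel D), id_comp,
      cellMachine_zero_comp_eq_id g.symm_apply_apply]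
  · rw [comp_assoc, ← comp_assoc (cellMachine g 0),
      cellMachine_zero_comp_eq_id g.apply_symm_apply, id_comp,
      stateShift_comp_eq_id (neg_add_cancel D)]

end

/-- A classical Turing machine is reversible iff it is of the form `T₁ ∘ T₀` with
`T₀` a state-symbol permutation and `T₁` a state-dependent shift. -/
theorem classical_reversibility (n k : ℕ) (hn : 1 ≤ n) (hk : 1 ≤ k)
    (T : X1 n k → X1 n k) (hT : IsClassical T) :
    IsRTM1 T ↔
      ∃ T₀ T₁ : X1 n k → X1 n k,
        IsStateSymbolPerm T₀ ∧ IsStateDependentShift T₁ ∧ T = T₁ ∘ T₀ := by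
  constructor
  · rintro ⟨-, S, -, hS, -⟩
    have hinj : Injective T := LeftInverse.injective (congrFun hS)
    obtain ⟨φ, μ, hμ, rfl⟩ := hT.exists_eq_cellMachine
    obtain ⟨g, D, hD, hcomp⟩ :=
      exists_eq_stateShift_comp_of_injective_cellMachine hinj (by simp) hμ
    exact ⟨cellMachine g 0, stateShift D, isStateSymbolPerm_iff.mpr ⟨g, rfl⟩,
      isStateDependentShift_iff.mpr ⟨D, hD, rfl⟩, hcomp⟩
  · rintro ⟨T₀, T₁, h₀, h₁, rfl⟩
    obtain ⟨g, rfl⟩ := isStateSymbolPerm_iff.mp h₀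
    obtain ⟨D, -, rfl⟩ := isStateDependentShift_iff.mp h₁
    exact isRTM1_stateShift_comp_cellMachine g D
end
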